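/- Let 1 < α ≤ 2, J(r) = r^{-α}, h_* > 0 and δ > 0, and define the field h by h_0 = h_* and h_x = h_*|x|^{−δ} for x ≠ 0. Assume either (i) δ > α − 1, or (ii) 1 < α < 2, δ = α − 1 and h_* < (8−4α)/(2^{3−α}+6−3α), or (iii) α = 2, δ = 1 and h_* < 4/(3+2·log 2). Then there exists R ∈ ℕ such that, with the truncated field ĥ defined by ĥ_x = 0 for |x| ≤ R and ĥ_x = h_x otherwise, for every ε ∈ (0,1) there exists β̄ > 0 so that for all β ≥ β̄ and all L ∈ ℕ one has ⟨σ₀⟩⁺_{J,ĥ,β,L} ≥ 1 − ε and ⟨σ₀⟩⁻_{J,ĥ,β,L} ≤ −(1 − ε). -/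

import Mathlib

noncomputable section

/-! Configurations in `Ω_L^+` (equal to `+1` off `[-L,L]`) are encoded by the finite set
`A ⊆ [-L,L]` of their minus sites, and configurations in `Ω_L^-` by the finite set of
their plus sites. -/

/-- The spin configuration with plus boundary condition and minus sites `A`. -/
def spinP (A : Finset ℤ) (x : ℤ) : ℝ := if x ∈ A then -1 else 1

/-- The spin configuration with minus boundary condition and plus sites `A`. -/
def spinM (A : Finset ℤ) (x : ℤ) : ℝ := if x ∈ A then 1 else -1

/-- The Hamiltonian `H_J(σ) = ∑_{x<y} |x−y|^{-α} (1 − σ_x σ_y)`, as a `tsum` over pairs. -/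
def hamJ (α : ℝ) (σ : ℤ → ℝ) : ℝ :=
  ∑' p : ℤ × ℤ, if p.1 < p.2 then |(p.1 : ℝ) - (p.2 : ℝ)| ^ (-α) * (1 - σ p.1 * σ p.2) else 0

/-- The Hamiltonian with field, plus boundary condition. -/
def hamP (α : ℝ) (h : ℤ → ℝ) (σ : ℤ → ℝ) : ℝ := hamJ α σ + ∑' x : ℤ, h x * (1 - σ x)

/-- The Hamiltonian with field, minus boundary condition. -/
def hamM (α : ℝ) (h : ℤ → ℝ) (σ : ℤ → ℝ) : ℝ := hamJ α σ - ∑' x : ℤ, h x * (1 + σ x)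

/-- Subsets of the box `[-L, L]`. -/
def box (L : ℕ) : Finset (Finset ℤ) := (Finset.Icc (-(L : ℤ)) (L : ℤ)).powerset

/-- The finite-volume Gibbs expectation `⟨σ₀⟩⁺_{J,h,β,L}`. -/
def avgP (α : ℝ) (h : ℤ → ℝ) (β : ℝ) (L : ℕ) : ℝ :=
  (∑ A ∈ box L, spinP A 0 * Real.exp (-β * hamP α h (spinP A))) /
    ∑ A ∈ box L, Real.exp (-β * hamP α h (spinP A))

/-- The finite-volume Gibbs expectation `⟨σ₀⟩⁻_{J,h,β,L}`. -/
def avgM (α : ℝ) (h : ℤ → ℝ) (β : ℝ) (L : ℕ) : ℝ :=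
  (∑ A ∈ box L, spinM A 0 * Real.exp (-β * hamM α h (spinM A))) /
    ∑ A ∈ box L, Real.exp (-β * hamM α h (spinM A))

/-- The polynomially decaying field: `h 0 = h⋆`, `h x = h⋆ |x|^{-δ}` for `x ≠ 0`. -/
def hf (hs δ : ℝ) (x : ℤ) : ℝ := if x = 0 then hs else hs * |(x : ℝ)| ^ (-δ)

/-- The field truncated to vanish on `[-R, R]`. -/
def hfTrunc (hs δ : ℝ) (R : ℕ) (x : ℤ) : ℝ := if |x| ≤ (R : ℤ) then 0 else hf hs δ x

namespace LongRangeIsing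

open scoped ENNReal

/-- The one-sided power-law kernel on `ℤ`, vanishing on nonpositive integers. -/
def kern (α : ℝ) (z : ℤ) : ℝ≥0∞ := if 0 < z then ENNReal.ofReal ((z : ℝ) ^ (-α)) else 0

/-- The tail of the kernel beyond `k`. -/
def tailSum (α : ℝ) (k : ℤ) : ℝ≥0∞ := ∑' z : ℤ, if k < z then kern α z else 0

/-- The interaction of `x` with the sites to its right which are separated from it by `A`. -/
def rightCut (α : ℝ) (A : Finset ℤ) (x : ℤ) : ℝ≥0∞ :=
  ∑' y : ℤ, if ¬(x ∈ A ↔ y ∈ A) then kern α (y - x) else 0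

/-- The interaction of `y` with the sites to its left which are separated from it by `A`. -/
def leftCut (α : ℝ) (A : Finset ℤ) (y : ℤ) : ℝ≥0∞ :=
  ∑' x : ℤ, if ¬(x ∈ A ↔ y ∈ A) then kern α (y - x) else 0

/-- The interaction between `A` and its complement. -/
def cut (α : ℝ) (A : Finset ℤ) : ℝ≥0∞ := ∑' x : ℤ, rightCut α A x

/-- The interaction of the pairs of sites which are separated by both `B` and `I`. -/
def crossCut (α : ℝ) (B I : Finset ℤ) : ℝ≥0∞ :=
  ∑' x : ℤ, ∑' y : ℤ,
    if ¬(x ∈ I ↔ y ∈ I) ∧ ¬(x ∈ B ↔ y ∈ B) then kern α (y - x) else 0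

lemma tsum_leftCut (α : ℝ) (A : Finset ℤ) : ∑' y : ℤ, leftCut α A y = cut α A := by
  unfold leftCut cut rightCut
  exact ENNReal.tsum_comm

lemma tsum_ite_mem (A : Finset ℤ) (F : ℤ → ℝ≥0∞) :
    ∑' x : ℤ, (if x ∈ A then F x else 0) = ∑ x ∈ A, F x := by
  rw [tsum_eq_sum (s := A)]
  · exact Finset.sum_congr rfl fun x hx => by simp [hx]
  · intro x hx
    simp [hx]

lemma kern_of_nonpos (α : ℝ) {z : ℤ} (hz : z ≤ 0) : kern α z = 0 := by
  simp [kern, not_lt.mpr hz]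

lemma kern_one (α : ℝ) : kern α 1 = 1 := by
  simp [kern]

lemma kern_anti {α : ℝ} (hα : 0 ≤ α) {z w : ℤ} (hz : 0 < z) (hzw : z ≤ w) :
    kern α w ≤ kern α z := by
  have hw : 0 < w := hz.trans_le hzw
  simp only [kern, hz, hw, if_true]
  apply ENNReal.ofReal_le_ofReal
  apply Real.rpow_le_rpow_of_nonpos (by exact_mod_cast hz) (by exact_mod_cast hzw)
  linarith

lemma kern_ne_top (α : ℝ) (z : ℤ) : kern α z ≠ ⊤ := by
  unfold kern; split_ifs <;> simp

lemma inv_sq_le_kern {α : ℝ} (hα : α ≤ 2) {z : ℤ} (hz : 0 < z) :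
    ENNReal.ofReal (1 / (z : ℝ) ^ 2) ≤ kern α z := by
  simp only [kern, hz, if_true]
  apply ENNReal.ofReal_le_ofReal
  have h1 : (1 : ℝ) ≤ z := by exact_mod_cast hz
  have : (1 : ℝ) / (z : ℝ) ^ 2 = (z : ℝ) ^ (-2 : ℝ) := by
    rw [Real.rpow_neg (by linarith), one_div]; norm_cast
  rw [this]
  exact Real.rpow_le_rpow_of_exponent_le h1 (by linarith)

lemma tailSum_zero (α : ℝ) : tailSum α 0 = ∑' z : ℤ, kern α z := by
  unfold tailSum
  apply tsum_congr
  intro z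
  split_ifs with h
  · rfl
  · exact (kern_of_nonpos α (not_lt.mp h)).symm

lemma tsum_kern_ne_top {α : ℝ} (hα : 1 < α) : ∑' z : ℤ, kern α z ≠ ⊤ := by
  refine ne_top_of_le_ne_top (Real.summable_abs_int_rpow hα).tsum_ofReal_ne_top
    (ENNReal.tsum_le_tsum fun z => ?_)
  unfold kern
  split_ifs with h
  · rw [abs_of_pos (by exact_mod_cast h)]
  · exact zero_le

lemma tailSum_anti (α : ℝ) {k l : ℤ} (h : k ≤ l) : tailSum α l ≤ tailSum α k := by
  apply ENNReal.tsum_le_tsum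
  intro z
  by_cases h1 : l < z
  · simp [h1, h.trans_lt h1]
  · simp [h1]

lemma tailSum_ne_top {α : ℝ} (hα : 1 < α) {k : ℤ} (hk : 0 ≤ k) : tailSum α k ≠ ⊤ :=
  ne_top_of_le_ne_top (by rw [tailSum_zero]; exact tsum_kern_ne_top hα) (tailSum_anti α hk)

lemma tailSum_succ (α : ℝ) (k : ℤ) : tailSum α k = kern α (k + 1) + tailSum α (k + 1) := by
  unfold tailSum
  rw [← tsum_ite_eq (k + 1) (fun z => kern α z), ← ENNReal.tsum_add]
  apply tsum_congr
  intro z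
  rcases lt_trichotomy z (k + 1) with h | h | h
  · simp [h.ne, not_lt.mpr h.le, not_lt.mpr (Int.lt_add_one_iff.mp h)]
  · simp [h]
  · simp [h.ne', h, (lt_add_one k).trans h]

lemma tailSum_zero_eq (α : ℝ) (n : ℕ) :
    tailSum α 0 = ∑ k ∈ Finset.range n, kern α (k + 1) + tailSum α n := by
  induction n with
  | zero => simp
  | succ n ih => rw [ih, Finset.sum_range_succ, tailSum_succ α n, add_assoc]; push_cast; rfl

lemma tsum_kern_sub_right (α : ℝ) (x k : ℤ) :
    ∑' y : ℤ, (if k < y - x then kern α (y - x) else 0) = tailSum α k :=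
  (Equiv.subRight x).tsum_eq (fun z => if k < z then kern α z else 0)

lemma tsum_kern_sub_left (α : ℝ) (y k : ℤ) :
    ∑' x : ℤ, (if k < y - x then kern α (y - x) else 0) = tailSum α k :=
  (Equiv.subLeft y).tsum_eq (fun z => if k < z then kern α z else 0)

lemma kern_pos_ite (α : ℝ) (z : ℤ) : kern α z = if 0 < z then kern α z else 0 := by
  split_ifs with h
  · rfl
  · exact kern_of_nonpos α (not_lt.mp h)

/-- Pointwise inclusion–exclusion for the cut of a symmetric difference. -/
lemma cut_symmDiff_add (α : ℝ) (B I : Finset ℤ) :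
    cut α (symmDiff B I) + 2 * crossCut α B I = cut α B + cut α I := by
  unfold cut crossCut rightCut
  rw [← ENNReal.tsum_mul_left, ← ENNReal.tsum_add, ← ENNReal.tsum_add]
  apply tsum_congr; intro x
  rw [← ENNReal.tsum_mul_left, ← ENNReal.tsum_add, ← ENNReal.tsum_add]
  apply tsum_congr; intro y
  simp only [Finset.mem_symmDiff]
  by_cases h1 : x ∈ B <;> by_cases h2 : y ∈ B <;> by_cases h3 : x ∈ I <;> by_cases h4 : y ∈ I <;>
    simp [h1, h2, h3, h4, two_mul]

lemma cut_le (α : ℝ) (A : Finset ℤ) : cut α A ≤ 2 * A.card * tailSum α 0 := by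
  have h1 : ∀ x y : ℤ, (if ¬(x ∈ A ↔ y ∈ A) then kern α (y - x) else 0) ≤
      (if x ∈ A then kern α (y - x) else 0) + (if y ∈ A then kern α (y - x) else 0) := by
    intro x y
    by_cases hx : x ∈ A <;> by_cases hy : y ∈ A <;> simp [hx, hy]
  have hsum1 : ∑' x : ℤ, ∑' y : ℤ, (if x ∈ A then kern α (y - x) else 0)
      = A.card * tailSum α 0 := by
    have : ∀ x : ℤ, ∑' y : ℤ, (if x ∈ A then kern α (y - x) else 0) =
        if x ∈ A then tailSum α 0 else 0 := by
      intro x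
      split_ifs
      · rw [← tsum_kern_sub_right α x 0]
        exact tsum_congr fun y => kern_pos_ite α _
      · simp
    simp_rw [this]
    rw [tsum_ite_mem]; simp
  have hsum2 : ∑' x : ℤ, ∑' y : ℤ, (if y ∈ A then kern α (y - x) else 0)
      = A.card * tailSum α 0 := by
    rw [ENNReal.tsum_comm]
    have : ∀ y : ℤ, ∑' x : ℤ, (if y ∈ A then kern α (y - x) else 0) =
        if y ∈ A then tailSum α 0 else 0 := by
      intro y
      split_ifs
      · rw [← tsum_kern_sub_left α y 0]
        exact tsum_congr fun x => kern_pos_ite α _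
      · simp
    simp_rw [this]
    rw [tsum_ite_mem]; simp
  calc cut α A ≤ ∑' x : ℤ, ∑' y : ℤ, ((if x ∈ A then kern α (y - x) else 0) +
        (if y ∈ A then kern α (y - x) else 0)) :=
        ENNReal.tsum_le_tsum fun x => ENNReal.tsum_le_tsum fun y => h1 x y
    _ = 2 * A.card * tailSum α 0 := by
        simp_rw [ENNReal.tsum_add]
        rw [hsum1, hsum2]; ring

lemma cut_ne_top {α : ℝ} (hα : 1 < α) (A : Finset ℤ) : cut α A ≠ ⊤ := by
  refine ne_top_of_le_ne_top ?_ (cut_le α A)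
  exact ENNReal.mul_ne_top (ENNReal.mul_ne_top (by simp) (by simp)) (tailSum_ne_top hα le_rfl)

lemma le_cut_singleton (α : ℝ) (x : ℤ) : 2 * tailSum α 0 ≤ cut α {x} := by
  have h1 : ∀ a b : ℤ, (if a = x then kern α (b - x) else 0) + (if b = x then kern α (x - a) else 0)
      ≤ (if ¬(a ∈ ({x} : Finset ℤ) ↔ b ∈ ({x} : Finset ℤ)) then kern α (b - a) else 0) := by
    intro a b
    by_cases ha : a = x <;> by_cases hb : b = x <;> simp [ha, hb, kern_of_nonpos]
  have h2 : ∑' a : ℤ, ∑' b : ℤ, ((if a = x then kern α (b - x) else 0) +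
      (if b = x then kern α (x - a) else 0)) = 2 * tailSum α 0 := by
    simp_rw [ENNReal.tsum_add]
    have e1 : ∀ a : ℤ, ∑' b : ℤ, (if a = x then kern α (b - x) else 0) =
        if a = x then tailSum α 0 else 0 := by
      intro a
      split_ifs
      · rw [← tsum_kern_sub_right α x 0]
        exact tsum_congr fun y => kern_pos_ite α _
      · simp
    have e2 : ∀ a : ℤ, ∑' b : ℤ, (if b = x then kern α (x - a) else 0) = kern α (x - a) :=
      fun a => tsum_ite_eq x (fun _ => kern α (x - a))
    simp_rw [e1, e2]
    rw [tsum_ite_eq x (fun _ => tailSum α 0), two_mul]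
    congr 1
    rw [← tsum_kern_sub_left α x 0]
    exact tsum_congr fun a => kern_pos_ite α _
  rw [← h2]
  exact ENNReal.tsum_le_tsum fun a => ENNReal.tsum_le_tsum fun b => h1 a b

lemma sum_le_sum_range_of_antitone (f : ℤ → ℝ≥0∞) (hf : ∀ z w : ℤ, 0 < z → z ≤ w → f w ≤ f z)
    (s : Finset ℤ) : (∀ z ∈ s, 0 < z) → ∑ z ∈ s, f z ≤ ∑ k ∈ Finset.range s.card, f (k + 1) := by
  induction s using Finset.induction_on_max with
  | empty => simp
  | insert a s ha ih =>
    intro hpos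
    have has : a ∉ s := fun h => (ha a h).false
    rw [Finset.sum_insert has, Finset.card_insert_of_notMem has, Finset.sum_range_succ, add_comm]
    refine add_le_add (ih fun z hz => hpos z (Finset.mem_insert_of_mem hz)) ?_
    apply hf _ _ (by positivity)
    have hsub : s ⊆ Finset.Ioo 0 a := fun z hz =>
      Finset.mem_Ioo.mpr ⟨hpos z (Finset.mem_insert_of_mem hz), ha z hz⟩
    have hc := Finset.card_le_card hsub
    have := hpos a (Finset.mem_insert_self _ _)
    simp only [Int.card_Ioo] at hc
    omega

lemma crossCut_singleton_le (α : ℝ) (B : Finset ℤ) (x : ℤ) (hB : ∀ y ∈ B, y < x) :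
    crossCut α B {x} ≤ ∑ y ∈ B, kern α (x - y) := by
  have hx : x ∉ B := fun h => (hB x h).false
  have h1 : ∀ a b : ℤ, (if ¬(a ∈ ({x} : Finset ℤ) ↔ b ∈ ({x} : Finset ℤ)) ∧ ¬(a ∈ B ↔ b ∈ B) then
      kern α (b - a) else 0) ≤ if b = x then (if a ∈ B then kern α (x - a) else 0) else 0 := by
    intro a b
    by_cases hb : b = x
    · subst hb
      by_cases ha : a ∈ B <;> simp [ha, hx]
      split_ifs <;> simp
    · by_cases ha : a = x
      · subst ha
        by_cases hb' : b ∈ B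
        · simp [hb, hx, hb', kern_of_nonpos α (sub_nonpos.mpr (hB b hb').le)]
        · simp [hb, hx, hb']
      · simp [ha, hb]
  refine (ENNReal.tsum_le_tsum fun a => ENNReal.tsum_le_tsum fun b => h1 a b).trans ?_
  have : ∀ a : ℤ, ∑' b : ℤ, (if b = x then (if a ∈ B then kern α (x - a) else 0) else 0) =
      if a ∈ B then kern α (x - a) else 0 := fun a => tsum_ite_eq x (fun _ => _)
  simp_rw [this]
  rw [tsum_ite_mem]

lemma cut_insert_max_ge {α : ℝ} (hα : 1 < α) (B : Finset ℤ) (x : ℤ) (hB : ∀ y ∈ B, y < x) :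
    cut α B + 2 * tailSum α B.card ≤ cut α (insert x B) := by
  have hx : x ∉ B := fun h => (hB x h).false
  have hsd : symmDiff B {x} = insert x B := by
    ext a
    simp only [Finset.mem_symmDiff, Finset.mem_singleton, Finset.mem_insert]
    constructor
    · tauto
    · rintro (rfl | h)
      · tauto
      · exact Or.inl ⟨h, fun e => hx (e ▸ h)⟩
  set P := ∑ k ∈ Finset.range B.card, kern α ((k : ℤ) + 1) with hP
  have hPtop : P ≠ ⊤ := ENNReal.sum_ne_top.mpr fun _ _ => kern_ne_top _ _
  have hcross : crossCut α B {x} ≤ P := by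
    refine (crossCut_singleton_le α B x hB).trans ?_
    have hinj : Set.InjOn (fun y : ℤ => x - y) (B : Set ℤ) := fun a _ b _ h => by
      simp only at h; omega
    have := sum_le_sum_range_of_antitone (kern α) (fun z w => kern_anti (by linarith))
      (B.image (fun y => x - y)) (by
        intro z hz
        obtain ⟨y, hy, rfl⟩ := Finset.mem_image.mp hz
        have := hB y hy
        omega)
    rwa [Finset.sum_image hinj, Finset.card_image_of_injOn hinj] at this
  have hid := cut_symmDiff_add α B {x}
  rw [hsd] at hid
  have h0 := le_cut_singleton α x
  rw [tailSum_zero_eq α B.card] at h0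
  have key : cut α B + 2 * tailSum α B.card + 2 * P ≤ cut α (insert x B) + 2 * P := by
    calc cut α B + 2 * tailSum α B.card + 2 * P = cut α B + 2 * (P + tailSum α B.card) := by ring
      _ ≤ cut α B + cut α {x} := by gcongr
      _ = cut α (insert x B) + 2 * crossCut α B {x} := hid.symm
      _ ≤ _ := by gcongr
  exact (ENNReal.add_le_add_iff_right (ENNReal.mul_ne_top (by simp) hPtop)).mp key

/-- Rearrangement lower bound: among sets of given cardinality, intervals have the smallest cut. -/
lemma cut_ge {α : ℝ} (hα : 1 < α) (A : Finset ℤ) :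
    2 * ∑ k ∈ Finset.range A.card, ((k : ℝ≥0∞) + 1) * kern α (k + 1)
      + 2 * A.card * tailSum α A.card ≤ cut α A := by
  induction A using Finset.induction_on_max with
  | empty => simp
  | insert a s ha ih =>
    have has : a ∉ s := fun h => (ha a h).false
    refine le_trans (le_of_eq ?_) ((add_le_add_left ih _).trans (cut_insert_max_ge hα s a ha))
    rw [Finset.card_insert_of_notMem has, Finset.sum_range_succ, tailSum_succ α s.card]
    push_cast
    ring

lemma kern_mul_left {α : ℝ} (M : ℕ) (hM : 0 < M) {s : ℤ} (hs : 0 < s) :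
    kern α (M * s) = ENNReal.ofReal ((M : ℝ) ^ (-α)) * kern α s := by
  have hM' : (0 : ℝ) < M := by exact_mod_cast hM
  have hs' : (0 : ℝ) < s := by exact_mod_cast hs
  have : (0 : ℤ) < M * s := by positivity
  simp only [kern, this, hs, if_true]
  rw [← ENNReal.ofReal_mul (by positivity)]
  push_cast
  rw [Real.mul_rpow hM'.le hs'.le]

lemma tailSum_mul_le {α : ℝ} (hα : 0 ≤ α) (M : ℕ) (hM : 0 < M) {n : ℤ} (hn : 0 < n) :
    tailSum α (M * n) ≤ ENNReal.ofReal ((M : ℝ) ^ (1 - α)) * tailSum α (n - 1) := by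
  have : NeZero M := ⟨hM.ne'⟩
  have hM' : (0 : ℝ) < M := by exact_mod_cast hM
  unfold tailSum
  rw [← (Int.divModEquiv M).symm.tsum_eq, ENNReal.tsum_prod', ← ENNReal.tsum_mul_left]
  apply ENNReal.tsum_le_tsum
  intro s
  have hterm : ∀ j : Fin M, (if (M : ℤ) * n < (Int.divModEquiv M).symm (s, j) then
      kern α ((Int.divModEquiv M).symm (s, j)) else 0) ≤
      if n - 1 < s then ENNReal.ofReal ((M : ℝ) ^ (-α)) * kern α s else 0 := by
    intro j
    have hval : (Int.divModEquiv M).symm (s, j) = s * M + (j : ℕ) := by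
      simp [Int.divModEquiv]
    rw [hval]
    have hj : ((j : ℕ) : ℤ) < M := by exact_mod_cast j.2
    have hMz : (0 : ℤ) < M := by exact_mod_cast hM
    split_ifs with h1 h2 h2
    · have hs : 0 < s := by omega
      rw [← kern_mul_left M hM hs]
      apply kern_anti hα (by positivity)
      nlinarith [Int.natCast_nonneg (j : ℕ)]
    · exfalso
      have : s + 1 ≤ n := by omega
      nlinarith
    · exact zero_le
    · exact le_rfl
  calc _ ≤ ∑' j : Fin M, (if n - 1 < s then ENNReal.ofReal ((M : ℝ) ^ (-α)) * kern α s else 0) :=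
        ENNReal.tsum_le_tsum hterm
    _ = _ := by
      rw [tsum_fintype, Finset.sum_const, Finset.card_univ, Fintype.card_fin, nsmul_eq_mul]
      split_ifs
      · rw [← mul_assoc]
        congr 1
        rw [← ENNReal.ofReal_natCast, ← ENNReal.ofReal_mul hM'.le]
        congr 1
        rw [sub_eq_add_neg, Real.rpow_add hM', Real.rpow_one]
      · simp

lemma card_mul_tailSum_le_cut {α : ℝ} (hα : 1 < α) (A : Finset ℤ) (hA : A.Nonempty) :
    2 * A.card * tailSum α (A.card - 1) ≤ cut α A := by
  refine le_trans ?_ (cut_ge hα A)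
  obtain ⟨m, hm⟩ : ∃ m, A.card = m + 1 := ⟨A.card - 1, by have := hA.card_pos; omega⟩
  rw [hm, Finset.sum_range_succ]
  push_cast
  rw [add_sub_cancel_right, tailSum_succ α m]
  calc 2 * ((m : ℝ≥0∞) + 1) * (kern α (m + 1) + tailSum α (m + 1))
      = 2 * (((m : ℝ≥0∞) + 1) * kern α (m + 1)) + 2 * (m + 1) * tailSum α (m + 1) := by ring
    _ ≤ _ := by gcongr; exact le_add_self

lemma sum_rpow_le_cut {α : ℝ} (hα : 1 < α) (A : Finset ℤ) :
    ∑ x ∈ A.erase 0, ENNReal.ofReal (|(x : ℝ)| ^ (1 - α)) ≤ cut α A := by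
  set f : ℤ → ℝ≥0∞ := fun z => ENNReal.ofReal (|(z : ℝ)| ^ (1 - α)) with hf
  have hanti : ∀ z w : ℤ, 0 < z → z ≤ w → f w ≤ f z := by
    intro z w hz hzw
    have hz' : (0 : ℝ) < z := by exact_mod_cast hz
    have hzw' : (z : ℝ) ≤ w := by exact_mod_cast hzw
    apply ENNReal.ofReal_le_ofReal
    rw [abs_of_pos hz', abs_of_pos (hz'.trans_le hzw')]
    exact Real.rpow_le_rpow_of_nonpos hz' hzw' (by linarith)
  have hk : ∀ k : ℕ, ((k : ℝ≥0∞) + 1) * kern α (k + 1) = f (k + 1) := by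
    intro k
    have h0 : (0 : ℤ) < k + 1 := by positivity
    have h1 : (0 : ℝ) < k + 1 := by positivity
    simp only [kern, h0, if_true, hf]
    have : ((k : ℝ≥0∞) + 1) = ENNReal.ofReal ((k : ℝ) + 1) := by
      rw [ENNReal.ofReal_add (by positivity) (by norm_num)]; simp
    rw [this, ← ENNReal.ofReal_mul h1.le]
    push_cast
    rw [abs_of_pos h1, sub_eq_add_neg, Real.rpow_add h1, Real.rpow_one]
  have hpart : ∀ s : Finset ℤ, (∀ z ∈ s, 0 < z) → s.card ≤ A.card →
      ∑ z ∈ s, f z ≤ ∑ k ∈ Finset.range A.card, ((k : ℝ≥0∞) + 1) * kern α (k + 1) := by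
    intro s hs hc
    refine (sum_le_sum_range_of_antitone f hanti s hs).trans ?_
    simp_rw [hk]
    exact Finset.sum_le_sum_of_subset (Finset.range_mono hc)
  have hsplit : ∑ x ∈ A.erase 0, f x =
      ∑ x ∈ A.filter (0 < ·), f x + ∑ x ∈ (A.filter (· < 0)).image (fun x => -x), f x := by
    rw [Finset.sum_image (fun a _ b _ h => neg_injective h)]
    have hneg : ∀ x : ℤ, f (-x) = f x := fun x => by simp [hf]
    simp_rw [hneg]
    rw [← Finset.sum_union]
    · apply Finset.sum_congr _ fun _ _ => rfl
      ext x
      simp only [Finset.mem_erase, Finset.mem_union, Finset.mem_filter]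
      constructor
      · rintro ⟨h, h'⟩
        rcases lt_or_gt_of_ne h with h | h <;> simp [h, h']
      · rintro (⟨h, h'⟩ | ⟨h, h'⟩)
        · exact ⟨h'.ne', h⟩
        · exact ⟨h'.ne, h⟩
    · rw [Finset.disjoint_filter]
      intro x _ h1 h2
      omega
  rw [hsplit]
  refine le_trans ?_ (le_self_add.trans (cut_ge hα A))
  rw [two_mul]
  refine add_le_add (hpart _ (fun z hz => (Finset.mem_filter.mp hz).2)
    (Finset.card_filter_le _ _)) (hpart _ ?_ ?_)
  · intro z hz
    obtain ⟨y, hy, rfl⟩ := Finset.mem_image.mp hz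
    have := (Finset.mem_filter.mp hy).2
    omega
  · exact Finset.card_image_le.trans (Finset.card_filter_le _ _)

/-- The number of points of `γ` in `(-∞, x]`. -/
def countLE (γ : Finset ℤ) (x : ℤ) : ℕ := (γ.filter (· ≤ x)).card

/-- The number of points of `γ` in `(x, y]`. -/
def countIoc (γ : Finset ℤ) (x y : ℤ) : ℕ := (γ.filter (fun p => x < p ∧ p ≤ y)).card

/-- The smallest interval of sites containing every site surrounded by `γ`. -/
def hull (γ : Finset ℤ) : Finset ℤ := (γ ×ˢ γ).biUnion fun p => Finset.Ico p.1 p.2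

/-- The sites surrounded by `γ`, a set of flip points (`p` stands for the bond `{p - 1, p}`). -/
def interior (γ : Finset ℤ) : Finset ℤ := (hull γ).filter fun x => Odd (countLE γ x)

/-- The flip points of `A`. -/
def flips (A : Finset ℤ) : Finset ℤ :=
  (A ∪ A.image (· + 1)).filter fun p => ¬(p - 1 ∈ A ↔ p ∈ A)

lemma countLE_add_countIoc (γ : Finset ℤ) {x y : ℤ} (h : x ≤ y) :
    countLE γ y = countLE γ x + countIoc γ x y := by
  unfold countLE countIoc
  rw [← Finset.card_union_of_disjoint]
  · congr 1
    ext p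
    simp only [Finset.mem_filter, Finset.mem_union]
    constructor
    · rintro ⟨h1, h2⟩
      by_cases h3 : p ≤ x
      · exact Or.inl ⟨h1, h3⟩
      · exact Or.inr ⟨h1, not_le.mp h3, h2⟩
    · rintro (⟨h1, h2⟩ | ⟨h1, _, h2⟩)
      · exact ⟨h1, h2.trans h⟩
      · exact ⟨h1, h2⟩
  · rw [Finset.disjoint_filter]
    intro p _ h1 h2
    omega

lemma mem_hull {γ : Finset ℤ} {x : ℤ} : x ∈ hull γ ↔ ∃ p ∈ γ, ∃ q ∈ γ, p ≤ x ∧ x < q := by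
  simp only [hull, Finset.mem_biUnion, Finset.mem_product, Finset.mem_Ico, Prod.exists]
  constructor
  · rintro ⟨p, q, ⟨hp, hq⟩, h⟩
    exact ⟨p, hp, q, hq, h⟩
  · rintro ⟨p, hp, q, hq, h⟩
    exact ⟨p, q, ⟨hp, hq⟩, h⟩

lemma exists_le_of_odd_countLE {γ : Finset ℤ} {x : ℤ} (h : Odd (countLE γ x)) : ∃ p ∈ γ, p ≤ x := by
  have : (γ.filter (· ≤ x)).Nonempty := Finset.card_pos.mp h.pos
  obtain ⟨p, hp⟩ := this
  exact ⟨p, Finset.mem_filter.mp hp⟩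

lemma exists_lt_of_odd_countLE {γ : Finset ℤ} (hγ : Even γ.card) {x : ℤ}
    (h : Odd (countLE γ x)) : ∃ p ∈ γ, x < p := by
  by_contra! hc
  have : γ.filter (· ≤ x) = γ := Finset.filter_true_of_mem hc
  rw [countLE, this] at h
  exact (Nat.not_even_iff_odd.mpr h) hγ

lemma mem_interior {γ : Finset ℤ} (hγ : Even γ.card) {x : ℤ} :
    x ∈ interior γ ↔ Odd (countLE γ x) := by
  simp only [interior, Finset.mem_filter, and_iff_right_iff_imp]
  intro h
  obtain ⟨p, hp, hpx⟩ := exists_le_of_odd_countLE h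
  obtain ⟨q, hq, hqx⟩ := exists_lt_of_odd_countLE hγ h
  exact mem_hull.mpr ⟨p, hp, q, hq, hpx, hqx⟩

lemma not_mem_interior_iff_iff {γ : Finset ℤ} (hγ : Even γ.card) {x y : ℤ} (h : x ≤ y) :
    ¬(x ∈ interior γ ↔ y ∈ interior γ) ↔ Odd (countIoc γ x y) := by
  rw [mem_interior hγ, mem_interior hγ, countLE_add_countIoc γ h]
  grind

lemma exists_mem_of_odd_countIoc {γ : Finset ℤ} {x y : ℤ} (h : Odd (countIoc γ x y)) :
    ∃ p ∈ γ, x < p ∧ p ≤ y := by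
  obtain ⟨p, hp⟩ := Finset.card_pos.mp h.pos
  exact ⟨p, Finset.mem_filter.mp hp⟩

lemma mem_hull_or_mem_hull {γ : Finset ℤ} (hγ : Even γ.card) {x y : ℤ}
    (h : Odd (countIoc γ x y)) : x ∈ hull γ ∨ y ∈ hull γ := by
  obtain ⟨p, hp, hxp, hpy⟩ := exists_mem_of_odd_countIoc h
  have : ∃ q ∈ γ, ¬(x < q ∧ q ≤ y) := by
    by_contra! hc
    rw [countIoc, Finset.filter_true_of_mem hc] at h
    exact (Nat.not_even_iff_odd.mpr h) hγ
  obtain ⟨q, hq, hqxy⟩ := this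
  by_cases hqx : q ≤ x
  · exact Or.inl (mem_hull.mpr ⟨q, hq, p, hp, hqx, hxp⟩)
  · exact Or.inr (mem_hull.mpr ⟨p, hp, q, hq, hpy, by
      by_contra h'; exact hqxy ⟨not_le.mp hqx, not_lt.mp h'⟩⟩)

lemma mem_flips {A : Finset ℤ} {p : ℤ} : p ∈ flips A ↔ ¬(p - 1 ∈ A ↔ p ∈ A) := by
  simp only [flips, Finset.mem_filter, Finset.mem_union, Finset.mem_image, and_iff_right_iff_imp]
  intro h
  by_cases hp : p ∈ A
  · exact Or.inl hp
  · exact Or.inr ⟨p - 1, by tauto, by ring⟩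

lemma countLE_succ (γ : Finset ℤ) (x : ℤ) :
    countLE γ (x + 1) = countLE γ x + if x + 1 ∈ γ then 1 else 0 := by
  rw [countLE_add_countIoc γ (lt_add_one x).le]
  congr 1
  have : γ.filter (fun p => x < p ∧ p ≤ x + 1) = if x + 1 ∈ γ then {x + 1} else ∅ := by
    ext p
    split_ifs with h
    · simp only [Finset.mem_filter, Finset.mem_singleton]
      constructor
      · rintro ⟨_, h2⟩; omega
      · rintro rfl; exact ⟨h, by omega, le_rfl⟩
    · simp only [Finset.mem_filter, Finset.notMem_empty, iff_false]
      rintro ⟨h1, h2, h3⟩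
      have : p = x + 1 := by omega
      exact h (this ▸ h1)
  rw [countIoc, this]
  split_ifs <;> simp

lemma exists_Icc_subset (A : Finset ℤ) : ∃ N : ℕ, A ⊆ Finset.Icc (-(N : ℤ)) N := by
  refine ⟨A.sup Int.natAbs, fun x hx => ?_⟩
  have : x.natAbs ≤ A.sup Int.natAbs := Finset.le_sup (f := Int.natAbs) hx
  rw [Finset.mem_Icc]
  omega

lemma flips_subset {A : Finset ℤ} {L : ℕ} (hA : A ⊆ Finset.Icc (-(L : ℤ)) L) :
    flips A ⊆ Finset.Icc (-(L : ℤ)) (L + 1) := by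
  intro p hp
  rw [mem_flips] at hp
  by_cases h : p ∈ A
  · have := Finset.mem_Icc.mp (hA h)
    rw [Finset.mem_Icc]; omega
  · have h' : p - 1 ∈ A := by tauto
    have := Finset.mem_Icc.mp (hA h')
    rw [Finset.mem_Icc]; omega

lemma mem_iff_odd_countLE_flips (A : Finset ℤ) (x : ℤ) : x ∈ A ↔ Odd (countLE (flips A) x) := by
  obtain ⟨N, hN⟩ := exists_Icc_subset A
  have hlow : ∀ y : ℤ, y < -(N : ℤ) → (y ∈ A ↔ Odd (countLE (flips A) y)) := by
    intro y hy
    have h1 : y ∉ A := fun h => by have := Finset.mem_Icc.mp (hN h); omega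
    have h2 : countLE (flips A) y = 0 := by
      rw [countLE, Finset.card_eq_zero, Finset.filter_eq_empty_iff]
      intro p hp
      have := Finset.mem_Icc.mp (flips_subset hN hp)
      omega
    simp [h1, h2]
  rcases lt_or_ge x (-(N : ℤ)) with h | h
  · exact hlow x h
  · have hstep : ∀ y : ℤ, (y ∈ A ↔ Odd (countLE (flips A) y)) →
        (y + 1 ∈ A ↔ Odd (countLE (flips A) (y + 1))) := by
      intro y hy
      rw [countLE_succ]
      have := mem_flips (A := A) (p := y + 1)
      rw [add_sub_cancel_right] at this
      by_cases hf : y + 1 ∈ flips A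
      · simp only [hf, if_true, Nat.odd_add_one, ← hy]
        tauto
      · simp only [hf, if_false, add_zero, ← hy]
        tauto
    have hbase := hlow (-(N : ℤ) - 1) (by omega)
    have hind : ∀ y : ℤ, -(N : ℤ) - 1 ≤ y → (y ∈ A ↔ Odd (countLE (flips A) y)) :=
      fun y hy => Int.leInduction (motive := fun y _ => (y ∈ A ↔ Odd (countLE (flips A) y)))
        hbase (fun n _ ih => hstep n ih) y hy
    exact hind x (by omega)

lemma even_card_flips (A : Finset ℤ) : Even (flips A).card := by
  obtain ⟨N, hN⟩ := exists_Icc_subset A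
  have h1 : (N : ℤ) + 1 ∉ A := fun h => by have := Finset.mem_Icc.mp (hN h); omega
  rw [mem_iff_odd_countLE_flips, Nat.not_odd_iff_even, countLE, Finset.filter_true_of_mem] at h1
  · exact h1
  · intro p hp
    exact (Finset.mem_Icc.mp (flips_subset hN hp)).2

/-- The diameter scales of contours. -/
def dscale (μ : ℕ) : ℕ → ℤ
  | 0 => 1
  | t + 1 => 2 ^ (t + μ + 2) * dscale μ t

/-- The separation scales of contours. -/
def gscale (μ t : ℕ) : ℤ := 2 ^ (t + μ) * dscale μ t

lemma dscale_pos (μ t : ℕ) : 0 < dscale μ t := by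
  induction t with
  | zero => simp [dscale]
  | succ t ih => rw [dscale]; positivity

lemma gscale_pos (μ t : ℕ) : 0 < gscale μ t := by
  have := dscale_pos μ t
  unfold gscale; positivity

lemma dscale_succ (μ t : ℕ) : dscale μ (t + 1) = 4 * gscale μ t := by
  rw [dscale, gscale]; ring

lemma dscale_le_gscale (μ t : ℕ) : dscale μ t ≤ gscale μ t := by
  have := dscale_pos μ t
  have h : (1 : ℤ) ≤ 2 ^ (t + μ) := one_le_pow₀ (by norm_num)
  unfold gscale; nlinarith

lemma dscale_mono (μ : ℕ) : Monotone (dscale μ) :=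
  monotone_nat_of_le_succ fun t => by
    have := dscale_le_gscale μ t
    have := gscale_pos μ t
    rw [dscale_succ]; omega

lemma gscale_mono (μ : ℕ) : Monotone (gscale μ) :=
  monotone_nat_of_le_succ fun t => by
    have h := dscale_le_gscale μ (t + 1)
    have := gscale_pos μ t
    rw [dscale_succ] at h; omega

lemma lt_dscale (μ t : ℕ) : (t : ℤ) < dscale μ t := by
  induction t with
  | zero => simp [dscale]
  | succ t ih =>
    have := dscale_le_gscale μ t
    rw [dscale_succ]; push_cast; omega

/-- The index of the smallest diameter scale bounding the diameter of `γ`. -/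
def lev (μ : ℕ) (γ : Finset ℤ) : ℕ := sInf {t | ∀ p ∈ γ, ∀ q ∈ γ, q - p ≤ dscale μ t}

lemma lev_le_iff {μ : ℕ} {γ : Finset ℤ} {t : ℕ} :
    lev μ γ ≤ t ↔ ∀ p ∈ γ, ∀ q ∈ γ, q - p ≤ dscale μ t := by
  have hne : {t | ∀ p ∈ γ, ∀ q ∈ γ, q - p ≤ dscale μ t}.Nonempty := by
    obtain ⟨N, hN⟩ := exists_Icc_subset γ
    refine ⟨2 * N, fun p hp q hq => ?_⟩
    have h1 := Finset.mem_Icc.mp (hN hp)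
    have h2 := Finset.mem_Icc.mp (hN hq)
    have := lt_dscale μ (2 * N)
    push_cast at this; omega
  constructor
  · intro h p hp q hq
    exact (Nat.sInf_mem hne p hp q hq).trans (dscale_mono μ h)
  · intro h
    exact Nat.sInf_le h

lemma sub_le_dscale_lev (μ : ℕ) {γ : Finset ℤ} {p q : ℤ} (hp : p ∈ γ) (hq : q ∈ γ) :
    q - p ≤ dscale μ (lev μ γ) := lev_le_iff.mp le_rfl p hp q hq

lemma lev_mono (μ : ℕ) {B γ : Finset ℤ} (h : B ⊆ γ) : lev μ B ≤ lev μ γ :=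
  lev_le_iff.mpr fun _ hp _ hq => sub_le_dscale_lev μ (h hp) (h hq)

/-- The two contours are far apart on the scale of the smaller one. -/
def Separated (μ : ℕ) (γ γ' : Finset ℤ) : Prop :=
  ∀ p ∈ γ, ∀ q ∈ γ', gscale μ (min (lev μ γ) (lev μ γ')) ≤ |p - q|

lemma Separated.symm {μ : ℕ} {γ γ' : Finset ℤ} (h : Separated μ γ γ') : Separated μ γ' γ := by
  intro p hp q hq
  rw [min_comm, abs_sub_comm]
  exact h q hq p hp

lemma Separated.mono_left {μ : ℕ} {B γ γ' : Finset ℤ} (h : Separated μ γ γ') (hB : B ⊆ γ) :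
    Separated μ B γ' := fun p hp q hq =>
  (gscale_mono μ (min_le_min_right _ (lev_mono μ hB))).trans (h p (hB hp) q hq)

lemma Separated.disjoint {μ : ℕ} {γ γ' : Finset ℤ} (h : Separated μ γ γ') : Disjoint γ γ' := by
  rw [Finset.disjoint_left]
  intro p hp hp'
  have := h p hp p hp'
  have := gscale_pos μ (min (lev μ γ) (lev μ γ'))
  simp at *; omega

/-- A decomposition of the flip points into mutually separated even contours. -/
structure IsContourPartition (μ : ℕ) (S : Finset ℤ) (P : Finset (Finset ℤ)) : Prop where
  nonempty : ∀ γ ∈ P, γ.Nonempty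
  even : ∀ γ ∈ P, Even γ.card
  biUnion_eq : P.biUnion id = S
  separated : ∀ γ ∈ P, ∀ γ' ∈ P, γ ≠ γ' → Separated μ γ γ'

/-- No proper even part of the contour can be split off. -/
def Irreducible (μ : ℕ) (γ : Finset ℤ) : Prop :=
  ∀ B ⊆ γ, B.Nonempty → B ≠ γ → Even B.card → ∃ p ∈ B, ∃ q ∈ γ \ B, |p - q| < gscale μ (lev μ B)

lemma IsContourPartition.split {μ : ℕ} {S : Finset ℤ} {P : Finset (Finset ℤ)}
    (hP : IsContourPartition μ S P) {γ B : Finset ℤ} (hγ : γ ∈ P) (hB : B ⊆ γ)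
    (hBne : B.Nonempty) (hBγ : B ≠ γ) (hBe : Even B.card)
    (hfar : ∀ p ∈ B, ∀ q ∈ γ \ B, gscale μ (lev μ B) ≤ |p - q|) :
    IsContourPartition μ S (insert B (insert (γ \ B) (P.erase γ))) := by
  have hsep : Separated μ B (γ \ B) := fun p hp q hq =>
    (gscale_mono μ (min_le_left _ _)).trans (hfar p hp q hq)
  have hoth : ∀ γ' ∈ P.erase γ, Separated μ γ γ' := fun γ' h' =>
    hP.separated γ hγ γ' (Finset.mem_of_mem_erase h') (Finset.ne_of_mem_erase h').symm
  have hsub : γ \ B ⊆ γ := Finset.sdiff_subset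
  refine ⟨?_, ?_, ?_, ?_⟩
  · intro η hη
    rcases Finset.mem_insert.mp hη with rfl | hη
    · exact hBne
    rcases Finset.mem_insert.mp hη with rfl | hη
    · rw [Finset.sdiff_nonempty]
      exact fun h => hBγ (hB.antisymm h)
    · exact hP.nonempty η (Finset.mem_of_mem_erase hη)
  · intro η hη
    rcases Finset.mem_insert.mp hη with rfl | hη
    · exact hBe
    rcases Finset.mem_insert.mp hη with rfl | hη
    · rw [Finset.card_sdiff_of_subset hB, Nat.even_sub (Finset.card_le_card hB)]
      simp [hBe, hP.even γ hγ]
    · exact hP.even η (Finset.mem_of_mem_erase hη)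
  · rw [Finset.biUnion_insert, Finset.biUnion_insert, ← Finset.union_assoc]
    simp only [id]
    rw [Finset.union_sdiff_of_subset hB, ← hP.biUnion_eq]
    nth_rw 2 [← Finset.insert_erase hγ]
    rw [Finset.biUnion_insert]; rfl
  · intro η hη η' hη' hne
    rw [Finset.mem_insert, Finset.mem_insert] at hη hη'
    rcases hη with rfl | rfl | hη <;> rcases hη' with rfl | rfl | hη'
    · exact absurd rfl hne
    · exact hsep
    · exact (hoth _ hη').mono_left hB
    · exact hsep.symm
    · exact absurd rfl hne
    · exact (hoth _ hη').mono_left hsub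
    · exact ((hoth _ hη).mono_left hB).symm
    · exact ((hoth _ hη).mono_left hsub).symm
    · exact hP.separated _ (Finset.mem_of_mem_erase hη) _ (Finset.mem_of_mem_erase hη') hne

lemma exists_contourPartition (μ : ℕ) {S : Finset ℤ} (hS : Even S.card) :
    ∃ P, IsContourPartition μ S P ∧ ∀ γ ∈ P, Irreducible μ γ := by
  classical
  have hbase : ∃ P, IsContourPartition μ S P := by
    rcases S.eq_empty_or_nonempty with rfl | hne
    · exact ⟨∅, by simp, by simp, by simp, by simp⟩
    · refine ⟨{S}, by simpa using hne, by simpa using hS, by simp, ?_⟩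
      intro γ hγ γ' hγ' h
      rw [Finset.mem_singleton] at hγ hγ'
      exact absurd (hγ.trans hγ'.symm) h
  have hmem : ∀ P, IsContourPartition μ S P → P ∈ S.powerset.powerset := by
    intro P hP
    rw [Finset.mem_powerset]
    intro γ hγ
    rw [Finset.mem_powerset, ← hP.biUnion_eq]
    exact Finset.subset_biUnion_of_mem id hγ
  obtain ⟨P, hP, hmax⟩ := Finset.exists_max_image
    (S.powerset.powerset.filter (IsContourPartition μ S)) Finset.card (by
      obtain ⟨P, hP⟩ := hbase
      exact ⟨P, Finset.mem_filter.mpr ⟨hmem P hP, hP⟩⟩)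
  have hP := (Finset.mem_filter.mp hP).2
  refine ⟨P, hP, fun γ hγ B hB hBne hBγ hBe => ?_⟩
  by_contra! hfar
  have hsplit := hP.split hγ hB hBne hBγ hBe hfar
  have hle := hmax _ (Finset.mem_filter.mpr ⟨hmem _ hsplit, hsplit⟩)
  have hnot : ∀ C ⊆ γ, C.Nonempty → C ∉ P.erase γ := by
    intro C hC hCne h
    obtain ⟨p, hp⟩ := hCne
    have := (hP.separated γ hγ C (Finset.mem_of_mem_erase h)
      (Finset.ne_of_mem_erase h).symm).disjoint
    exact Finset.disjoint_left.mp this (hC hp) hp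
  have hdne : (γ \ B).Nonempty := by
    rw [Finset.sdiff_nonempty]
    exact fun h => hBγ (hB.antisymm h)
  have h1 := hnot _ Finset.sdiff_subset hdne
  have h2 := hnot B hB hBne
  have h3 : B ≠ γ \ B := by
    intro h
    obtain ⟨p, hp⟩ := hBne
    have hp' := hp
    rw [h] at hp'
    exact (Finset.mem_sdiff.mp hp').2 hp
  rw [Finset.card_insert_of_notMem (by simp only [Finset.mem_insert, not_or]; exact ⟨h3, h2⟩),
    Finset.card_insert_of_notMem h1, Finset.card_erase_of_mem hγ] at hle
  have := Finset.card_pos.mpr ⟨γ, hγ⟩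
  omega

lemma IsContourPartition.card_filter {μ : ℕ} {S : Finset ℤ} {P : Finset (Finset ℤ)}
    (hP : IsContourPartition μ S P) (f : ℤ → Prop) [DecidablePred f] :
    (S.filter f).card = ∑ γ ∈ P, (γ.filter f).card := by
  rw [← hP.biUnion_eq, Finset.filter_biUnion, Finset.card_biUnion]
  · rfl
  · intro γ hγ γ' hγ' h
    exact Finset.disjoint_filter_filter (hP.separated γ hγ γ' hγ' h).disjoint

lemma exists_odd_of_odd_sum {ι : Type*} {s : Finset ι} {f : ι → ℕ} (h : Odd (∑ i ∈ s, f i)) :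
    ∃ i ∈ s, Odd (f i) := by
  by_contra! hc
  exact Nat.not_even_iff_odd.mpr h
    (Finset.even_sum f fun i hi => Nat.not_odd_iff_even.mp (hc i hi))

lemma IsContourPartition.exists_odd_countLE {μ : ℕ} {S : Finset ℤ} {P : Finset (Finset ℤ)}
    (hP : IsContourPartition μ S P) {x : ℤ} (h : Odd (countLE S x)) :
    ∃ γ ∈ P, Odd (countLE γ x) := by
  rw [countLE, hP.card_filter] at h
  exact exists_odd_of_odd_sum h

lemma IsContourPartition.exists_odd_countIoc {μ : ℕ} {A : Finset ℤ} {P : Finset (Finset ℤ)}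
    (hP : IsContourPartition μ (flips A) P) {γ : Finset ℤ} (hγ : γ ∈ P) {x y : ℤ} (hxy : x ≤ y)
    (hI : ¬(x ∈ interior γ ↔ y ∈ interior γ))
    (hB : ¬(x ∈ symmDiff A (interior γ) ↔ y ∈ symmDiff A (interior γ))) :
    ∃ γ' ∈ P.erase γ, Odd (countIoc γ' x y) := by
  have hA : x ∈ A ↔ y ∈ A := by
    simp only [Finset.mem_symmDiff] at hB
    tauto
  have h1 := countLE_add_countIoc (flips A) hxy
  rw [mem_iff_odd_countLE_flips A x, mem_iff_odd_countLE_flips A y, h1] at hA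
  rw [not_mem_interior_iff_iff (hP.even γ hγ) hxy] at hI
  have h2 : Even (countIoc (flips A) x y) := by grind
  have h3 : countIoc (flips A) x y = ∑ γ ∈ P, countIoc γ x y := hP.card_filter _
  rw [← Finset.add_sum_erase P _ hγ] at h3
  apply exists_odd_of_odd_sum
  grind

lemma exists_min_max {γ : Finset ℤ} (h : γ.Nonempty) :
    ∃ a ∈ γ, ∃ b ∈ γ, (∀ p ∈ γ, a ≤ p ∧ p ≤ b) ∧ hull γ = Finset.Ico a b := by
  refine ⟨γ.min' h, γ.min'_mem h, γ.max' h, γ.max'_mem h,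
    fun p hp => ⟨γ.min'_le p hp, γ.le_max' p hp⟩, ?_⟩
  ext x
  rw [mem_hull, Finset.mem_Ico]
  constructor
  · rintro ⟨p, hp, q, hq, h1, h2⟩
    exact ⟨(γ.min'_le p hp).trans h1, h2.trans_le (γ.le_max' q hq)⟩
  · rintro ⟨h1, h2⟩
    exact ⟨_, γ.min'_mem h, _, γ.max'_mem h, h1, h2⟩

lemma card_hull_le (μ : ℕ) (γ : Finset ℤ) : ((hull γ).card : ℤ) ≤ dscale μ (lev μ γ) := by
  rcases γ.eq_empty_or_nonempty with rfl | h
  · have : hull ∅ = ∅ := by simp [hull]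
    rw [this]
    simpa using (dscale_pos μ _).le
  · obtain ⟨a, ha, b, hb, hab, he⟩ := exists_min_max h
    have := sub_le_dscale_lev μ ha hb
    have := (hab a ha).2
    rw [he, Int.card_Ico]
    omega

/-- Sums over contours of sums over their hulls are controlled by separated windows on which the
summand is larger. -/
lemma sum_hull_le (μ : ℕ) (Q : Finset (Finset ℤ)) (F : ℤ → ℝ≥0∞) (w : Finset ℤ → ℤ)
    (hF : ∀ η ∈ Q, ∀ x ∈ hull η, ∀ z, w η ≤ z → z < w η + gscale μ (lev μ η) → F x ≤ F z)
    (hw : ∀ η ∈ Q, ∀ η' ∈ Q, η ≠ η' → lev μ η = lev μ η' →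
      gscale μ (lev μ η) ≤ |w η - w η'|) :
    ∑ η ∈ Q, ∑ x ∈ hull η, F x ≤ 2 * (2 ^ μ)⁻¹ * ∑' z, F z := by
  have hlevel : ∀ t : ℕ, ∑ η ∈ Q with lev μ η = t, ∑ x ∈ hull η, F x ≤
      (2 ^ (t + μ))⁻¹ * ∑' z, F z := by
    intro t
    obtain ⟨n, hn⟩ := Int.eq_ofNat_of_zero_le (dscale_pos μ t).le
    have hn0 : n ≠ 0 := by
      rintro rfl
      have := dscale_pos μ t
      simp at hn; omega
    have hg : gscale μ t = ((2 ^ (t + μ) * n : ℕ) : ℤ) := by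
      rw [gscale, hn]; push_cast; rfl
    have h1 : ∀ η ∈ Q.filter (fun η => lev μ η = t),
        ((2 ^ (t + μ) * n : ℕ) : ℝ≥0∞) * ∑ x ∈ hull η, F x ≤
          n * ∑ z ∈ Finset.Ico (w η) (w η + gscale μ t), F z := by
      intro η hη
      obtain ⟨hη, hl⟩ := Finset.mem_filter.mp hη
      have hc : ((hull η).card : ℝ≥0∞) ≤ n := by
        have := card_hull_le μ η
        rw [hl, hn] at this
        exact_mod_cast this
      have hcw : (Finset.Ico (w η) (w η + gscale μ t)).card = 2 ^ (t + μ) * n := by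
        rw [Int.card_Ico, hg, add_sub_cancel_left, Int.toNat_natCast]
      calc ((2 ^ (t + μ) * n : ℕ) : ℝ≥0∞) * ∑ x ∈ hull η, F x
          = ∑ x ∈ hull η, ∑ z ∈ Finset.Ico (w η) (w η + gscale μ t), F x := by
            simp only [Finset.sum_const, hcw, nsmul_eq_mul, Finset.mul_sum]
        _ ≤ ∑ x ∈ hull η, ∑ z ∈ Finset.Ico (w η) (w η + gscale μ t), F z := by
            refine Finset.sum_le_sum fun x hx => Finset.sum_le_sum fun z hz => ?_
            obtain ⟨hz1, hz2⟩ := Finset.mem_Ico.mp hz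
            exact hF η hη x hx z hz1 (by rw [hl]; exact hz2)
        _ = (hull η).card * ∑ z ∈ Finset.Ico (w η) (w η + gscale μ t), F z := by
            rw [Finset.sum_const, nsmul_eq_mul]
        _ ≤ _ := by gcongr
    have h2 : ∑ η ∈ Q with lev μ η = t, ∑ z ∈ Finset.Ico (w η) (w η + gscale μ t), F z ≤
        ∑' z, F z := by
      rw [← Finset.sum_biUnion]
      · exact ENNReal.sum_le_tsum _
      · intro η hη η' hη' hne
        obtain ⟨hη, hl⟩ := Finset.mem_filter.mp (Finset.mem_coe.mp hη)
        obtain ⟨hη', hl'⟩ := Finset.mem_filter.mp (Finset.mem_coe.mp hη')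
        have := hw η hη η' hη' hne (hl.trans hl'.symm)
        rw [hl] at this
        change Disjoint (Finset.Ico _ _) (Finset.Ico _ _)
        rw [Finset.disjoint_left]
        intro z hz hz'
        rw [Finset.mem_Ico] at hz hz'
        rcases abs_cases (w η - w η') with ⟨h, _⟩ | ⟨h, _⟩ <;> omega
    have h3 : ((2 ^ (t + μ) * n : ℕ) : ℝ≥0∞) * ∑ η ∈ Q with lev μ η = t, ∑ x ∈ hull η, F x ≤
        n * ∑' z, F z := by
      rw [Finset.mul_sum]
      refine (Finset.sum_le_sum h1).trans ?_
      rw [← Finset.mul_sum]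
      gcongr
    have h4 : (n : ℝ≥0∞) * (2 ^ (t + μ) * ∑ η ∈ Q with lev μ η = t, ∑ x ∈ hull η, F x) ≤
        n * ∑' z, F z := by
      convert h3 using 1
      push_cast; ring
    rw [ENNReal.mul_le_mul_iff_right (by exact_mod_cast hn0) (ENNReal.natCast_ne_top n)] at h4
    rw [← ENNReal.div_eq_inv_mul, ENNReal.le_div_iff_mul_le (by simp) (by simp), mul_comm]
    exact h4
  obtain ⟨N, hN⟩ : ∃ N, ∀ η ∈ Q, lev μ η < N :=
    ⟨Q.sup (lev μ) + 1, fun η hη => Nat.lt_succ_of_le (Finset.le_sup (f := lev μ) hη)⟩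
  rw [← Finset.sum_fiberwise_of_maps_to (t := Finset.range N) (g := lev μ)
    (fun η hη => Finset.mem_range.mpr (hN η hη))]
  refine (Finset.sum_le_sum fun t _ => hlevel t).trans ?_
  rw [← Finset.sum_mul]
  gcongr
  calc ∑ t ∈ Finset.range N, ((2 : ℝ≥0∞) ^ (t + μ))⁻¹
      = (∑ t ∈ Finset.range N, (2⁻¹ : ℝ≥0∞) ^ t) * (2 ^ μ)⁻¹ := by
        rw [Finset.sum_mul]
        refine Finset.sum_congr rfl fun t _ => ?_
        rw [pow_add, ENNReal.mul_inv (by simp) (by simp), ENNReal.inv_pow]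
    _ ≤ _ := by
        gcongr
        refine (ENNReal.sum_le_tsum _).trans ?_
        rw [ENNReal.tsum_geometric, ENNReal.one_sub_inv_two, inv_inv]

section Windows

variable {μ : ℕ} {γ η : Finset ℤ}

lemma le_or_ge_of_separated (hsep : Separated μ γ η) (hlev : lev μ η ≤ lev μ γ) {a b : ℤ}
    (ha : a ∈ η) (hb : b ∈ η) {p : ℤ} (hp : p ∈ γ) :
    p ≤ a - gscale μ (lev μ η) ∨ b + gscale μ (lev μ η) ≤ p := by
  have h1 := hsep p hp a ha
  have h2 := hsep p hp b hb
  rw [min_eq_right hlev] at h1 h2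
  have h3 := sub_le_dscale_lev μ ha hb
  have h4 := dscale_le_gscale μ (lev μ η)
  have h5 := gscale_pos μ (lev μ η)
  rcases abs_cases (p - a) with ⟨h, _⟩ | ⟨h, _⟩ <;>
    rcases abs_cases (p - b) with ⟨h', _⟩ | ⟨h', _⟩ <;> omega

lemma mem_interior_congr (hγ : Even γ.card) {x z : ℤ} (hxz : x ≤ z)
    (h : ∀ p ∈ γ, p ≤ x ∨ z < p) : x ∈ interior γ ↔ z ∈ interior γ := by
  by_contra hc
  obtain ⟨p, hp, h1, h2⟩ := exists_mem_of_odd_countIoc ((not_mem_interior_iff_iff hγ hxz).mp hc)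
  have := h p hp
  omega

lemma rightCut_le_rightCut {α : ℝ} (hα : 0 ≤ α) (hγ : Even γ.card) {x z : ℤ} (hxz : x ≤ z)
    (h : ∀ p ∈ γ, p ≤ x ∨ z < p) :
    rightCut α (interior γ) x ≤ rightCut α (interior γ) z := by
  have hiff := mem_interior_congr hγ hxz h
  refine ENNReal.tsum_le_tsum fun y => ?_
  simp only [← hiff]
  split_ifs with hd
  · exact zero_le
  · rcases le_or_gt y x with hy | hy
    · rw [kern_of_nonpos α (by omega : y - x ≤ 0)]; exact zero_le
    · obtain ⟨p, hp, h1, h2⟩ :=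
        exists_mem_of_odd_countIoc ((not_mem_interior_iff_iff hγ hy.le).mp hd)
      have := h p hp
      exact kern_anti hα (by omega) (by omega)

lemma leftCut_le_leftCut {α : ℝ} (hα : 0 ≤ α) (hγ : Even γ.card) {x z : ℤ} (hzx : z ≤ x)
    (h : ∀ p ∈ γ, p ≤ z ∨ x < p) :
    leftCut α (interior γ) x ≤ leftCut α (interior γ) z := by
  have hiff := mem_interior_congr hγ hzx h
  refine ENNReal.tsum_le_tsum fun y => ?_
  simp only [hiff]
  split_ifs with hd
  · exact zero_le
  · rcases le_or_gt x y with hy | hy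
    · rw [kern_of_nonpos α (by omega : x - y ≤ 0)]; exact zero_le
    · obtain ⟨p, hp, h1, h2⟩ :=
        exists_mem_of_odd_countIoc ((not_mem_interior_iff_iff hγ hy.le).mp hd)
      have := h p hp
      exact kern_anti hα (by omega) (by omega)

end Windows

lemma two_card_mul_tailSum_le {α : ℝ} (hα : 1 < α) (μ : ℕ) (γ : Finset ℤ) :
    2 * (interior γ).card * tailSum α (gscale μ (lev μ γ)) ≤
      ENNReal.ofReal (((2 ^ μ : ℕ) : ℝ) ^ (1 - α)) * cut α (interior γ) := by
  rcases (interior γ).eq_empty_or_nonempty with h | h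
  · simp [h]
  have hc : ((interior γ).card : ℤ) ≤ dscale μ (lev μ γ) :=
    le_trans (by exact_mod_cast Finset.card_le_card (Finset.filter_subset _ _))
      (card_hull_le μ γ)
  have hpos : (0 : ℤ) < (interior γ).card := by exact_mod_cast Finset.card_pos.mpr h
  have h1 : ((2 ^ μ : ℕ) : ℤ) * (interior γ).card ≤ gscale μ (lev μ γ) := by
    rw [gscale, pow_add, mul_comm (2 ^ lev μ γ), mul_assoc]
    push_cast
    have : (1 : ℤ) ≤ 2 ^ lev μ γ := one_le_pow₀ (by norm_num)
    gcongr
    nlinarith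
  calc 2 * (interior γ).card * tailSum α (gscale μ (lev μ γ))
      ≤ 2 * (interior γ).card * (ENNReal.ofReal (((2 ^ μ : ℕ) : ℝ) ^ (1 - α)) *
          tailSum α ((interior γ).card - 1)) := by
        gcongr
        exact (tailSum_anti α h1).trans (tailSum_mul_le (by linarith) (2 ^ μ) (by positivity) hpos)
    _ = ENNReal.ofReal (((2 ^ μ : ℕ) : ℝ) ^ (1 - α)) *
          (2 * (interior γ).card * tailSum α ((interior γ).card - 1)) := by ring
    _ ≤ _ := by gcongr; exact card_mul_tailSum_le_cut hα _ h

lemma tsum_sum_ite_mem (Q : Finset (Finset ℤ)) (F : ℤ → ℝ≥0∞) :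
    ∑' x, ∑ η ∈ Q, (if x ∈ hull η then F x else 0) = ∑ η ∈ Q, ∑ x ∈ hull η, F x := by
  rw [Summable.tsum_finsetSum fun _ _ => ENNReal.summable]
  exact Finset.sum_congr rfl fun η _ => tsum_ite_mem (hull η) F

lemma IsContourPartition.kern_le {α : ℝ} {μ : ℕ} {A : Finset ℤ} {P : Finset (Finset ℤ)}
    (hP : IsContourPartition μ (flips A) P) {γ : Finset ℤ} (hγ : γ ∈ P) (x y : ℤ)
    (hI : ¬(x ∈ interior γ ↔ y ∈ interior γ))
    (hB : ¬(x ∈ symmDiff A (interior γ) ↔ y ∈ symmDiff A (interior γ))) :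
    kern α (y - x) ≤
      (if x ∈ interior γ then (if gscale μ (lev μ γ) < y - x then kern α (y - x) else 0) else 0) +
      (if y ∈ interior γ then (if gscale μ (lev μ γ) < y - x then kern α (y - x) else 0) else 0) +
      (∑ η ∈ (P.erase γ).filter (fun η => lev μ η < lev μ γ),
        if x ∈ hull η then kern α (y - x) else 0) +
      (∑ η ∈ (P.erase γ).filter (fun η => lev μ η < lev μ γ),
        if y ∈ hull η then kern α (y - x) else 0) := by
  rcases le_or_gt y x with hxy | hxy
  · rw [kern_of_nonpos α (by omega : y - x ≤ 0)]; exact zero_le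
  obtain ⟨η, hη, hodd⟩ := hP.exists_odd_countIoc hγ hxy.le hI hB
  have hηP := Finset.mem_of_mem_erase hη
  rcases lt_or_ge (lev μ η) (lev μ γ) with hlev | hlev
  · have hmem : η ∈ (P.erase γ).filter (fun η => lev μ η < lev μ γ) :=
      Finset.mem_filter.mpr ⟨hη, hlev⟩
    rcases mem_hull_or_mem_hull (hP.even η hηP) hodd with hx | hy
    · refine le_trans ?_ le_self_add
      refine le_trans ?_ le_add_self
      refine le_trans ?_ (Finset.single_le_sum (fun _ _ => zero_le) hmem)
      rw [if_pos hx]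
    · refine le_trans ?_ le_add_self
      refine le_trans ?_ (Finset.single_le_sum (fun _ _ => zero_le) hmem)
      rw [if_pos hy]
  · obtain ⟨q, hq, hq1, hq2⟩ := exists_mem_of_odd_countIoc hodd
    obtain ⟨p, hp, hp1, hp2⟩ := exists_mem_of_odd_countIoc
      ((not_mem_interior_iff_iff (hP.even γ hγ) hxy.le).mp hI)
    have hsep := hP.separated γ hγ η hηP (Finset.ne_of_mem_erase hη).symm p hp q hq
    rw [min_eq_left hlev] at hsep
    have hlong : gscale μ (lev μ γ) < y - x := by
      rcases abs_cases (p - q) with ⟨h, _⟩ | ⟨h, _⟩ <;> omega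
    refine le_trans ?_ le_self_add
    refine le_trans ?_ le_self_add
    rw [if_pos hlong]
    by_cases hx : x ∈ interior γ
    · rw [if_pos hx]; exact le_self_add
    · have hy : y ∈ interior γ := by tauto
      rw [if_pos hy]; exact le_add_self

lemma IsContourPartition.crossCut_le {α : ℝ} (hα : 1 < α) {μ : ℕ} {A : Finset ℤ}
    {P : Finset (Finset ℤ)} (hP : IsContourPartition μ (flips A) P) {γ : Finset ℤ} (hγ : γ ∈ P) :
    crossCut α (symmDiff A (interior γ)) (interior γ) ≤
      (ENNReal.ofReal (((2 ^ μ : ℕ) : ℝ) ^ (1 - α)) + 4 * (2 ^ μ)⁻¹) * cut α (interior γ) := by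
  set I := interior γ with hIdef
  set Q := (P.erase γ).filter (fun η => lev μ η < lev μ γ) with hQ
  set G := gscale μ (lev μ γ) with hG
  have hQP : ∀ η ∈ Q, η ∈ P ∧ Separated μ γ η ∧ lev μ η < lev μ γ := by
    intro η hη
    obtain ⟨h1, h2⟩ := Finset.mem_filter.mp hη
    have := Finset.mem_of_mem_erase h1
    exact ⟨this, hP.separated γ hγ η this (Finset.ne_of_mem_erase h1).symm, h2⟩
  have hex : ∀ η : Finset ℤ, ∃ a b : ℤ, η ∈ P → a ∈ η ∧ b ∈ η ∧ hull η = Finset.Ico a b := by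
    intro η
    by_cases h : η ∈ P
    · obtain ⟨a, ha, b, hb, _, he⟩ := exists_min_max (hP.nonempty η h)
      exact ⟨a, b, fun _ => ⟨ha, hb, he⟩⟩
    · exact ⟨0, 0, fun h' => absurd h' h⟩
  choose lo hi hlohi using hex
  have hα0 : 0 ≤ α := by linarith
  have hγe := hP.even γ hγ
  have hwin : ∀ w : Finset ℤ → ℤ, (∀ η ∈ P, w η ∈ η) → ∀ η ∈ Q, ∀ η' ∈ Q, η ≠ η' →
      lev μ η = lev μ η' → gscale μ (lev μ η) ≤ |w η - w η'| := by
    intro w hw η hη η' hη' hne hl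
    have := hP.separated η (hQP η hη).1 η' (hQP η' hη').1 hne _ (hw η (hQP η hη).1) _
      (hw η' (hQP η' hη').1)
    rwa [← hl, min_self] at this
  have hR : ∑ η ∈ Q, ∑ x ∈ hull η, rightCut α I x ≤ 2 * (2 ^ μ)⁻¹ * cut α I := by
    refine sum_hull_le μ Q _ hi ?_ (hwin hi fun η hη => (hlohi η hη).2.1)
    intro η hη x hx z hz1 hz2
    obtain ⟨hηP, hsep, hlev⟩ := hQP η hη
    obtain ⟨h1, h2, h3⟩ := hlohi η hηP
    rw [h3, Finset.mem_Ico] at hx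
    have := gscale_pos μ (lev μ η)
    refine rightCut_le_rightCut hα0 hγe (by omega) fun p hp => ?_
    have := le_or_ge_of_separated hsep hlev.le h1 h2 hp
    omega
  have hL : ∑ η ∈ Q, ∑ x ∈ hull η, leftCut α I x ≤ 2 * (2 ^ μ)⁻¹ * cut α I := by
    rw [← tsum_leftCut]
    refine sum_hull_le μ Q _ (fun η => lo η - gscale μ (lev μ η)) ?_ ?_
    · intro η hη x hx z hz1 hz2
      obtain ⟨hηP, hsep, hlev⟩ := hQP η hη
      obtain ⟨h1, h2, h3⟩ := hlohi η hηP
      rw [h3, Finset.mem_Ico] at hx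
      have := gscale_pos μ (lev μ η)
      refine leftCut_le_leftCut hα0 hγe (by omega) fun p hp => ?_
      have := le_or_ge_of_separated hsep hlev.le h1 h2 hp
      omega
    · intro η hη η' hη' hne hl
      have := hwin lo (fun η hη => (hlohi η hη).1) η hη η' hη' hne hl
      rw [← hl]
      convert this using 2
      ring
  have hX : ∑' x, ∑' y, (if x ∈ I then (if G < y - x then kern α (y - x) else 0) else 0) =
      I.card * tailSum α G := by
    rw [← nsmul_eq_mul, ← Finset.sum_const, ← tsum_ite_mem]
    refine tsum_congr fun x => ?_
    split_ifs
    · exact tsum_kern_sub_right α x G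
    · exact tsum_zero
  have hY : ∑' x, ∑' y, (if y ∈ I then (if G < y - x then kern α (y - x) else 0) else 0) =
      I.card * tailSum α G := by
    rw [ENNReal.tsum_comm, ← nsmul_eq_mul, ← Finset.sum_const, ← tsum_ite_mem]
    refine tsum_congr fun y => ?_
    split_ifs
    · exact tsum_kern_sub_left α y G
    · exact tsum_zero
  have hX' : ∑' x, ∑' y, (∑ η ∈ Q, if x ∈ hull η then
      (if ¬(x ∈ I ↔ y ∈ I) then kern α (y - x) else 0) else 0) =
      ∑ η ∈ Q, ∑ x ∈ hull η, rightCut α I x := by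
    rw [← tsum_sum_ite_mem]
    refine tsum_congr fun x => ?_
    rw [Summable.tsum_finsetSum fun _ _ => ENNReal.summable]
    refine Finset.sum_congr rfl fun η _ => ?_
    split_ifs
    · rfl
    · exact tsum_zero
  have hY' : ∑' x, ∑' y, (∑ η ∈ Q, if y ∈ hull η then
      (if ¬(x ∈ I ↔ y ∈ I) then kern α (y - x) else 0) else 0) =
      ∑ η ∈ Q, ∑ y ∈ hull η, leftCut α I y := by
    rw [ENNReal.tsum_comm, ← tsum_sum_ite_mem]
    refine tsum_congr fun y => ?_
    rw [Summable.tsum_finsetSum fun _ _ => ENNReal.summable]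
    refine Finset.sum_congr rfl fun η _ => ?_
    split_ifs
    · rfl
    · exact tsum_zero
  calc crossCut α (symmDiff A I) I
      ≤ ∑' x, ∑' y, ((if x ∈ I then (if G < y - x then kern α (y - x) else 0) else 0) +
          (if y ∈ I then (if G < y - x then kern α (y - x) else 0) else 0) +
          (∑ η ∈ Q, if x ∈ hull η then
            (if ¬(x ∈ I ↔ y ∈ I) then kern α (y - x) else 0) else 0) +
          (∑ η ∈ Q, if y ∈ hull η then
            (if ¬(x ∈ I ↔ y ∈ I) then kern α (y - x) else 0) else 0)) := by
        refine ENNReal.tsum_le_tsum fun x => ENNReal.tsum_le_tsum fun y => ?_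
        by_cases h : ¬(x ∈ I ↔ y ∈ I) ∧ ¬(x ∈ symmDiff A I ↔ y ∈ symmDiff A I)
        · have := hP.kern_le (α := α) hγ x y h.1 h.2
          simp only [if_pos h, if_pos h.1]
          exact this
        · rw [if_neg h]; exact zero_le
    _ = I.card * tailSum α G + I.card * tailSum α G + ∑ η ∈ Q, ∑ x ∈ hull η, rightCut α I x +
          ∑ η ∈ Q, ∑ y ∈ hull η, leftCut α I y := by
        simp only [ENNReal.tsum_add, hX, hY, hX', hY']
    _ ≤ ENNReal.ofReal (((2 ^ μ : ℕ) : ℝ) ^ (1 - α)) * cut α I +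
          2 * (2 ^ μ)⁻¹ * cut α I + 2 * (2 ^ μ)⁻¹ * cut α I := by
        gcongr
        refine le_trans (le_of_eq ?_) (two_card_mul_tailSum_le hα μ γ)
        ring
    _ = _ := by ring

/-- The points of `S` at distance more than `r` from the other points of `S`. -/
def isolated (r : ℤ) (S : Finset ℤ) : Finset ℤ :=
  S.filter fun s => ∀ s' ∈ S, s' ≠ s → r < |s - s'|

lemma mem_isolated {r : ℤ} {S : Finset ℤ} {s : ℤ} :
    s ∈ isolated r S ↔ s ∈ S ∧ ∀ s' ∈ S, s' ≠ s → r < |s - s'| := Finset.mem_filter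

lemma exists_thinning {r : ℤ} (hr : 0 ≤ r) (S : Finset ℤ) :
    ∃ S' ⊆ S, (∀ s ∈ S, ∃ s' ∈ S', s' ≤ s ∧ s ≤ s' + r) ∧
      3 * S'.card ≤ 2 * S.card + (isolated r S).card := by
  induction hn : S.card using Nat.strong_induction_on generalizing S with
  | _ n ih =>
  rcases S.eq_empty_or_nonempty with rfl | hne
  · exact ⟨∅, le_rfl, by simp, by simp⟩
  obtain ⟨a, ha, hamin⟩ : ∃ a ∈ S, ∀ s ∈ S, a ≤ s := ⟨S.min' hne, S.min'_mem hne, S.min'_le⟩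
  set S₁ := S.erase a with hS₁
  have hlt : ∀ s ∈ S₁, a < s := fun s hs =>
    lt_of_le_of_ne (hamin s (Finset.mem_of_mem_erase hs)) (Finset.ne_of_mem_erase hs).symm
  have hins : insert a S₁ = S := Finset.insert_erase ha
  have hcard : S.card = S₁.card + 1 := by
    rw [hS₁, Finset.card_erase_of_mem ha]
    have := Finset.card_pos.mpr hne
    omega
  by_cases hclose : ∃ b ∈ S₁, b ≤ a + r
  · have hne₁ : S₁.Nonempty := let ⟨b, hb, _⟩ := hclose; ⟨b, hb⟩
    obtain ⟨b, hb, hbmin⟩ : ∃ b ∈ S₁, ∀ s ∈ S₁, b ≤ s :=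
      ⟨S₁.min' hne₁, S₁.min'_mem hne₁, S₁.min'_le⟩
    have hba : b ≤ a + r := by
      obtain ⟨c, hc, hca⟩ := hclose
      exact (hbmin c hc).trans hca
    have hab := hlt b hb
    set S₂ := S₁.erase b with hS₂
    have hlt₂ : ∀ s ∈ S₂, b < s := fun s hs =>
      lt_of_le_of_ne (hbmin s (Finset.mem_of_mem_erase hs)) (Finset.ne_of_mem_erase hs).symm
    have hins₂ : insert b S₂ = S₁ := Finset.insert_erase hb
    have hcard₂ : S₁.card = S₂.card + 1 := by
      rw [hS₂, Finset.card_erase_of_mem hb]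
      have := Finset.card_pos.mpr hne₁
      omega
    obtain ⟨S', hS', hcov, hle⟩ := ih S₂.card (by omega) S₂ rfl
    refine ⟨insert a S', ?_, ?_, ?_⟩
    · rw [← hins, ← hins₂]
      exact Finset.insert_subset_insert _ (hS'.trans (Finset.subset_insert _ _))
    · intro s hs
      rw [← hins, ← hins₂, Finset.mem_insert, Finset.mem_insert] at hs
      rcases hs with rfl | rfl | hs
      · exact ⟨s, Finset.mem_insert_self _ _, le_rfl, by omega⟩
      · exact ⟨a, Finset.mem_insert_self _ _, hab.le, hba⟩
      · obtain ⟨s', hs', h⟩ := hcov s hs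
        exact ⟨s', Finset.mem_insert_of_mem hs', h⟩
    · have hiso : (isolated r S₂).card ≤ (isolated r S).card + 1 := by
        have hsub : ∀ c ∈ isolated r S₂, c ∉ isolated r S → ∀ c' ∈ S₂, c ≤ c' := by
          intro c hc hcS c' hc'
          by_contra hlt'
          rw [mem_isolated] at hc hcS
          apply hcS
          have h1 := hlt₂ c hc.1
          have h2 := hlt₂ c' hc'
          have h3 := hc.2 c' hc' (by omega)
          rw [abs_of_pos (by omega)] at h3
          refine ⟨by rw [← hins, ← hins₂]; simp [hc.1], fun s hs hsc => ?_⟩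
          rw [← hins, ← hins₂, Finset.mem_insert, Finset.mem_insert] at hs
          rcases hs with rfl | rfl | hs
          · rw [abs_of_pos (by omega)]; omega
          · rw [abs_of_pos (by omega)]; omega
          · exact hc.2 s hs hsc
        have hone : (isolated r S₂ \ isolated r S).card ≤ 1 := by
          rw [Finset.card_le_one]
          intro c hc c' hc'
          rw [Finset.mem_sdiff] at hc hc'
          exact le_antisymm (hsub c hc.1 hc.2 c' (mem_isolated.mp hc'.1).1)
            (hsub c' hc'.1 hc'.2 c (mem_isolated.mp hc.1).1)
        have := Finset.card_le_card_sdiff_add_card (s := isolated r S₂) (t := isolated r S)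
        omega
      have := Finset.card_insert_le a S'
      omega
  · push Not at hclose
    obtain ⟨S', hS', hcov, hle⟩ := ih S₁.card (by omega) S₁ rfl
    refine ⟨insert a S', ?_, ?_, ?_⟩
    · rw [← hins]
      exact Finset.insert_subset_insert _ hS'
    · intro s hs
      rw [← hins, Finset.mem_insert] at hs
      rcases hs with rfl | hs
      · exact ⟨s, Finset.mem_insert_self _ _, le_rfl, by omega⟩
      · obtain ⟨s', hs', h⟩ := hcov s hs
        exact ⟨s', Finset.mem_insert_of_mem hs', h⟩
    · have hiso : insert a (isolated r S₁) ⊆ isolated r S := by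
        intro c hc
        rw [Finset.mem_insert] at hc
        rw [mem_isolated]
        rcases hc with rfl | hc
        · refine ⟨ha, fun s hs hsc => ?_⟩
          have := hclose s (Finset.mem_erase.mpr ⟨hsc, hs⟩)
          rw [abs_of_neg (by omega)]; omega
        · rw [mem_isolated] at hc
          refine ⟨Finset.mem_of_mem_erase hc.1, fun s hs hsc => ?_⟩
          by_cases hsa : s = a
          · have := hclose c hc.1
            rw [abs_of_pos (by omega)]; omega
          · exact hc.2 s (Finset.mem_erase.mpr ⟨hsa, hs⟩) hsc
      have h1 := Finset.card_le_card hiso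
      rw [Finset.card_insert_of_notMem fun h => by
        have := hlt a (mem_isolated.mp h).1; omega] at h1
      have := Finset.card_insert_le a S'
      omega

/-- Successive thinnings of `γ` along the scales. -/
def thinSeq (μ : ℕ) (γ : Finset ℤ) : ℕ → Finset ℤ
  | 0 => γ
  | t + 1 => Classical.choose (exists_thinning
      (add_pos (dscale_pos μ t) (gscale_pos μ t)).le (thinSeq μ γ t))

lemma thinSeq_succ_spec (μ : ℕ) (γ : Finset ℤ) (t : ℕ) :
    thinSeq μ γ (t + 1) ⊆ thinSeq μ γ t ∧
      (∀ s ∈ thinSeq μ γ t, ∃ s' ∈ thinSeq μ γ (t + 1),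
        s' ≤ s ∧ s ≤ s' + (dscale μ t + gscale μ t)) ∧
      3 * (thinSeq μ γ (t + 1)).card ≤ 2 * (thinSeq μ γ t).card +
        (isolated (dscale μ t + gscale μ t) (thinSeq μ γ t)).card :=
  Classical.choose_spec (exists_thinning
      (add_pos (dscale_pos μ t) (gscale_pos μ t)).le (thinSeq μ γ t))

lemma thinSeq_subset (μ : ℕ) (γ : Finset ℤ) (t : ℕ) : thinSeq μ γ t ⊆ γ := by
  induction t with
  | zero => exact subset_rfl
  | succ t ih => exact (thinSeq_succ_spec μ γ t).1.trans ih

lemma exists_mem_thinSeq (μ : ℕ) (γ : Finset ℤ) (t : ℕ) {p : ℤ} (hp : p ∈ γ) :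
    ∃ s ∈ thinSeq μ γ t, s ≤ p ∧ p ≤ s + dscale μ t := by
  induction t with
  | zero => exact ⟨p, hp, le_rfl, by simp [dscale]⟩
  | succ t ih =>
    obtain ⟨s, hs, h1, h2⟩ := ih
    obtain ⟨s', hs', h3, h4⟩ := (thinSeq_succ_spec μ γ t).2.1 s hs
    have := dscale_le_gscale μ t
    have := gscale_pos μ t
    refine ⟨s', hs', by omega, ?_⟩
    rw [dscale_succ]; omega

/-- The isolated points of the thinned contour, when there are several points left. -/
def lonely (μ : ℕ) (γ : Finset ℤ) (t : ℕ) : Finset ℤ :=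
  if 2 ≤ (thinSeq μ γ t).card then isolated (dscale μ t + gscale μ t) (thinSeq μ γ t) else ∅

/-- The number of points of the thinned contour, when there are several points left. -/
def thinCard (μ : ℕ) (γ : Finset ℤ) (t : ℕ) : ℕ :=
  if 2 ≤ (thinSeq μ γ t).card then (thinSeq μ γ t).card else 0

lemma three_mul_thinCard_succ_le (μ : ℕ) (γ : Finset ℤ) (t : ℕ) :
    3 * thinCard μ γ (t + 1) ≤ 2 * thinCard μ γ t + (lonely μ γ t).card := by
  obtain ⟨h1, -, h3⟩ := thinSeq_succ_spec μ γ t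
  have h2 := Finset.card_le_card h1
  unfold thinCard lonely
  split_ifs <;> simp <;> omega

lemma sum_thinCard_le {μ : ℕ} (hμ : 2 ≤ μ) (γ : Finset ℤ) (n : ℕ) :
    ∑ t ∈ Finset.range n, (t + μ + 2) * thinCard μ γ t ≤
      6 * (μ + 2) * γ.card + 5 * ∑ t ∈ Finset.range n, (t + μ) * (lonely μ γ t).card := by
  have key : ∀ n, ∑ t ∈ Finset.range n, (t + μ + 2) * thinCard μ γ t +
      6 * ((n + μ + 2) * thinCard μ γ n) ≤
      6 * (μ + 2) * γ.card + 5 * ∑ t ∈ Finset.range n, (t + μ) * (lonely μ γ t).card := by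
    intro n
    induction n with
    | zero =>
      have h : thinCard μ γ 0 ≤ γ.card := by
        unfold thinCard
        split_ifs
        · exact le_rfl
        · exact Nat.zero_le _
      simp only [Finset.range_zero, Finset.sum_empty]
      nlinarith
    | succ n ih =>
      rw [Finset.sum_range_succ, Finset.sum_range_succ]
      have h := three_mul_thinCard_succ_le μ γ n
      set Y := thinCard μ γ n
      set Y' := thinCard μ γ (n + 1)
      set T := (lonely μ γ n).card
      have h1 : 12 * ((n + 1 + μ + 2) * Y') ≤ 5 * ((n + μ + 2) * (2 * Y + T)) := by
        have : 4 * (n + 1 + μ + 2) ≤ 5 * (n + μ + 2) := by omega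
        have := Nat.mul_le_mul this h
        nlinarith
      have h2 : (n + μ + 2) * T ≤ 2 * ((n + μ) * T) := by
        have : n + μ + 2 ≤ 2 * (n + μ) := by omega
        have := Nat.mul_le_mul_right T this
        nlinarith
      nlinarith
  exact le_trans (Nat.le_add_right _ _) (key n)

lemma half_le_sum_inv (k : ℕ) {d : ℤ} (hd : 0 < d) :
    (k : ℝ) / 2 ≤ ∑ u ∈ Finset.Ico d (2 ^ k * d), 1 / (u : ℝ) := by
  induction k with
  | zero => simp
  | succ k ih =>
    have hpos : 0 < (2 : ℤ) ^ k * d := by positivity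
    have h1 : d ≤ 2 ^ k * d := le_mul_of_one_le_left hd.le (one_le_pow₀ (by norm_num))
    have h2 : (2 : ℤ) ^ (k + 1) * d = 2 ^ k * d + 2 ^ k * d := by ring
    rw [← Finset.Ico_union_Ico_eq_Ico h1 (by omega : 2 ^ k * d ≤ 2 ^ (k + 1) * d),
      Finset.sum_union (Finset.Ico_disjoint_Ico_consecutive _ _ _)]
    have h3 : (1 : ℝ) / 2 ≤ ∑ u ∈ Finset.Ico (2 ^ k * d) (2 ^ (k + 1) * d), 1 / (u : ℝ) := by
      set m := (2 : ℤ) ^ k * d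
      have hm : (0 : ℝ) < m := by exact_mod_cast hpos
      have hc : ((Finset.Ico m (2 ^ (k + 1) * d)).card : ℝ) = m := by
        rw [Int.card_Ico, h2, add_sub_cancel_right]
        exact_mod_cast Int.toNat_of_nonneg hpos.le
      have := Finset.card_nsmul_le_sum (Finset.Ico m (2 ^ (k + 1) * d))
        (fun u : ℤ => 1 / (u : ℝ)) (1 / (2 * m)) (by
          intro u hu
          rw [Finset.mem_Ico, h2] at hu
          have hu0 : (0 : ℝ) < u := by exact_mod_cast (by omega : 0 < u)
          apply one_div_le_one_div_of_le hu0
          exact_mod_cast (by omega : u ≤ 2 * m))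
      rw [nsmul_eq_mul, hc] at this
      refine le_trans (le_of_eq ?_) this
      field_simp
    push_cast
    linarith

lemma countIoc_eq_of_gap {γ : Finset ℤ} {s d g x y : ℤ}
    (hlow : ∀ q ∈ γ, q < s → q < s - g) (hhigh : ∀ q ∈ γ, s + d < q → s + d + g < q)
    (hx1 : s - g < x) (hx2 : x < s) (hy1 : s + d ≤ y) (hy2 : y < s + d + g) :
    countIoc γ x y = (γ.filter fun p => s ≤ p ∧ p ≤ s + d).card := by
  unfold countIoc
  congr 1
  apply Finset.filter_congr
  intro p hp
  have := hlow p hp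
  have := hhigh p hp
  constructor
  · rintro ⟨h1, h2⟩
    constructor <;> by_contra h <;> omega
  · rintro ⟨h1, h2⟩
    omega

lemma le_rightCut_of_gap {α : ℝ} (hα0 : 0 ≤ α) (hα2 : α ≤ 2) {γ : Finset ℤ} (hγ : Even γ.card)
    {s d g u : ℤ} (hlow : ∀ q ∈ γ, q < s → q < s - g)
    (hhigh : ∀ q ∈ γ, s + d < q → s + d + g < q)
    (hodd : Odd (γ.filter fun p => s ≤ p ∧ p ≤ s + d).card) (hd : 0 < d) (hdu : d ≤ u)
    (hug : u < g) :
    ENNReal.ofReal (1 / (9 * u)) ≤ rightCut α (interior γ) (s - u) := by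
  have hu : (0 : ℝ) < u := by exact_mod_cast (by omega : 0 < u)
  calc ENNReal.ofReal (1 / (9 * u))
      = u.toNat * ENNReal.ofReal (1 / ((3 * u : ℤ) : ℝ) ^ 2) := by
        have : (u.toNat : ℝ≥0∞) = ENNReal.ofReal u := by
          rw [← ENNReal.ofReal_natCast]
          congr 1
          exact_mod_cast Int.toNat_of_nonneg (by omega)
        rw [this, ← ENNReal.ofReal_mul hu.le]
        congr 1
        push_cast
        field_simp
        norm_num
    _ ≤ ∑ y ∈ Finset.Ico (s + d) (s + d + u), kern α (y - (s - u)) := by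
        have hc : (Finset.Ico (s + d) (s + d + u)).card = u.toNat := by
          rw [Int.card_Ico, add_sub_cancel_left]
        rw [← hc, ← nsmul_eq_mul]
        apply Finset.card_nsmul_le_sum
        intro y hy
        rw [Finset.mem_Ico] at hy
        exact (inv_sq_le_kern hα2 (by omega)).trans (kern_anti hα0 (by omega) (by omega))
    _ = ∑ y ∈ Finset.Ico (s + d) (s + d + u),
          if ¬(s - u ∈ interior γ ↔ y ∈ interior γ) then kern α (y - (s - u)) else 0 := by
        refine Finset.sum_congr rfl fun y hy => ?_
        rw [Finset.mem_Ico] at hy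
        rw [if_pos]
        rw [not_mem_interior_iff_iff hγ (by omega), countIoc_eq_of_gap hlow hhigh (by omega)
          (by omega) hy.1 (by omega)]
        exact hodd
    _ ≤ _ := ENNReal.sum_le_tsum _

lemma card_le_cut (α : ℝ) {γ : Finset ℤ} (hγ : Even γ.card) :
    (γ.card : ℝ≥0∞) ≤ cut α (interior γ) := by
  calc (γ.card : ℝ≥0∞) = ∑ x ∈ γ.image (· - 1), (1 : ℝ≥0∞) := by
        rw [Finset.sum_const, nsmul_eq_mul, mul_one,
          Finset.card_image_of_injective _ (sub_left_injective)]
    _ ≤ ∑ x ∈ γ.image (· - 1), rightCut α (interior γ) x := by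
        refine Finset.sum_le_sum fun x hx => ?_
        obtain ⟨p, hp, rfl⟩ := Finset.mem_image.mp hx
        refine le_trans ?_ (ENNReal.le_tsum p)
        rw [if_pos, sub_sub_cancel, kern_one]
        rw [not_mem_interior_iff_iff hγ (by omega)]
        have : γ.filter (fun q => p - 1 < q ∧ q ≤ p) = {p} := by
          ext q
          rw [Finset.mem_filter, Finset.mem_singleton]
          constructor
          · rintro ⟨_, h1, h2⟩; omega
          · rintro rfl; exact ⟨hp, by omega, le_rfl⟩
        rw [countIoc, this]
        simp
    _ ≤ _ := ENNReal.sum_le_tsum _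

section Lonely

variable {μ : ℕ} {γ : Finset ℤ} {t : ℕ} {s : ℤ}

lemma mem_lonely : s ∈ lonely μ γ t ↔ 2 ≤ (thinSeq μ γ t).card ∧
    s ∈ isolated (dscale μ t + gscale μ t) (thinSeq μ γ t) := by
  unfold lonely
  split_ifs with h <;> simp [h]

lemma lonely_gap (hs : s ∈ lonely μ γ t) :
    (∀ q ∈ γ, q < s → q < s - gscale μ t) ∧
      ∀ q ∈ γ, s + dscale μ t < q → s + dscale μ t + gscale μ t < q := by
  obtain ⟨-, hiso⟩ := mem_lonely.mp hs
  obtain ⟨-, hiso⟩ := mem_isolated.mp hiso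
  have hd := dscale_pos μ t
  constructor <;> intro q hq hqs <;> obtain ⟨s', hs', h1, h2⟩ := exists_mem_thinSeq μ γ t hq
  · have := hiso s' hs' (by omega)
    rw [abs_of_pos (by omega)] at this
    omega
  · have := hiso s' hs' (by omega)
    rcases abs_cases (s - s') with ⟨h, _⟩ | ⟨h, _⟩
    · have := gscale_pos μ t
      omega
    · omega

lemma lonely_odd (hirr : Irreducible μ γ) (hs : s ∈ lonely μ γ t) :
    Odd (γ.filter fun p => s ≤ p ∧ p ≤ s + dscale μ t).card := by
  obtain ⟨hlow, hhigh⟩ := lonely_gap hs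
  obtain ⟨hcard, hiso⟩ := mem_lonely.mp hs
  obtain ⟨hsS, hiso⟩ := mem_isolated.mp hiso
  have hd := dscale_pos μ t
  set B := γ.filter fun p => s ≤ p ∧ p ≤ s + dscale μ t with hB
  by_contra heven
  rw [Nat.not_odd_iff_even] at heven
  have hlev : lev μ B ≤ t := lev_le_iff.mpr fun p hp q hq => by
    have := (Finset.mem_filter.mp hp).2
    have := (Finset.mem_filter.mp hq).2
    omega
  have hne : B ≠ γ := by
    intro h
    obtain ⟨s', hs', hne⟩ := Finset.exists_mem_ne (by omega : 1 < (thinSeq μ γ t).card) s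
    have h1 := thinSeq_subset μ γ t hs'
    rw [← h] at h1
    have h2 := (Finset.mem_filter.mp h1).2
    have h3 := hiso s' hs' hne
    have := gscale_pos μ t
    rcases abs_cases (s - s') with ⟨h, _⟩ | ⟨h, _⟩ <;> omega
  obtain ⟨p, hp, q, hq, hpq⟩ := hirr B (Finset.filter_subset _ _)
    ⟨s, Finset.mem_filter.mpr ⟨thinSeq_subset μ γ t hsS, le_rfl, by omega⟩⟩ hne heven
  have hg := gscale_mono μ hlev
  obtain ⟨hqγ, hqB⟩ := Finset.mem_sdiff.mp hq
  have hp' := (Finset.mem_filter.mp hp).2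
  have h1 := hlow q hqγ
  have h2 := hhigh q hqγ
  have h3 : ¬(s ≤ q ∧ q ≤ s + dscale μ t) := fun h => hqB (Finset.mem_filter.mpr ⟨hqγ, h⟩)
  rcases abs_cases (p - q) with ⟨h, _⟩ | ⟨h, _⟩ <;> omega

lemma le_sum_rightCut_of_lonely {α : ℝ} (hα0 : 0 ≤ α) (hα2 : α ≤ 2) (hγ : Even γ.card)
    (hirr : Irreducible μ γ) (hs : s ∈ lonely μ γ t) :
    ((t + μ : ℕ) : ℝ≥0∞) ≤ 18 * ∑ x ∈ (Finset.Ico (dscale μ t) (gscale μ t)).image (s - ·),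
      rightCut α (interior γ) x := by
  obtain ⟨hlow, hhigh⟩ := lonely_gap hs
  have hd := dscale_pos μ t
  rw [Finset.sum_image fun _ _ _ _ h => by simpa using h]
  calc ((t + μ : ℕ) : ℝ≥0∞)
      = ENNReal.ofReal (18 * ((1 / 9) * (((t + μ : ℕ) : ℝ) / 2))) := by
        rw [← ENNReal.ofReal_natCast]
        congr 1
        ring
    _ ≤ ENNReal.ofReal (18 * ∑ u ∈ Finset.Ico (dscale μ t) (gscale μ t), 1 / (9 * (u : ℝ))) := by
        apply ENNReal.ofReal_le_ofReal
        have := half_le_sum_inv (t + μ) hd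
        have h2 : ∑ u ∈ Finset.Ico (dscale μ t) (gscale μ t), 1 / (9 * (u : ℝ)) =
            1 / 9 * ∑ u ∈ Finset.Ico (dscale μ t) (gscale μ t), 1 / (u : ℝ) := by
          rw [Finset.mul_sum]
          exact Finset.sum_congr rfl fun u _ => by rw [one_div_mul_one_div]
        rw [h2]
        gcongr
        exact this
    _ = 18 * ∑ u ∈ Finset.Ico (dscale μ t) (gscale μ t), ENNReal.ofReal (1 / (9 * (u : ℝ))) := by
        rw [ENNReal.ofReal_mul (by norm_num), ENNReal.ofReal_sum_of_nonneg]
        · simp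
        · intro u hu
          have : (0 : ℝ) ≤ u := by
            exact_mod_cast hd.le.trans (Finset.mem_Ico.mp hu).1
          positivity
    _ ≤ _ := by
        gcongr with u hu
        rw [Finset.mem_Ico] at hu
        exact le_rightCut_of_gap hα0 hα2 hγ hlow hhigh (lonely_odd hirr hs) hd hu.1 hu.2

end Lonely

lemma sum_lonely_le {α : ℝ} (hα0 : 0 ≤ α) (hα2 : α ≤ 2) {μ : ℕ} {γ : Finset ℤ}
    (hγ : Even γ.card) (hirr : Irreducible μ γ) (n : ℕ) :
    ((∑ t ∈ Finset.range n, (t + μ) * (lonely μ γ t).card : ℕ) : ℝ≥0∞) ≤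
      18 * cut α (interior γ) := by
  set J := (Finset.range n).sigma (lonely μ γ) with hJ
  set W : (_ : ℕ) × ℤ → Finset ℤ := fun i =>
    (Finset.Ico (dscale μ i.1) (gscale μ i.1)).image (i.2 - ·) with hW
  have hdisj : (J : Set ((_ : ℕ) × ℤ)).PairwiseDisjoint W := by
    rintro ⟨t, s⟩ hi ⟨t', s'⟩ hi' hne
    have hs : s ∈ lonely μ γ t := (Finset.mem_sigma.mp (Finset.mem_coe.mp hi)).2
    have hs' : s' ∈ lonely μ γ t' :=
      (Finset.mem_sigma.mp (Finset.mem_coe.mp hi')).2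
    have hmem : ∀ {t s}, s ∈ lonely μ γ t → s ∈ γ := fun h =>
      thinSeq_subset _ _ _ (mem_isolated.mp (mem_lonely.mp h).2).1
    change Disjoint (W _) (W _)
    rw [Finset.disjoint_left]
    intro x hx hx'
    obtain ⟨u, hu, rfl⟩ := Finset.mem_image.mp hx
    obtain ⟨u', hu', hxu⟩ := Finset.mem_image.mp hx'
    rw [Finset.mem_Ico] at hu hu'
    have h1 := (lonely_gap hs).1 s' (hmem hs')
    have h2 := (lonely_gap hs').1 s (hmem hs)
    have h3 := dscale_pos μ t
    have h4 := dscale_pos μ t'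
    have hu2 : dscale μ t ≤ u ∧ u < gscale μ t := hu
    have hu2' : dscale μ t' ≤ u' ∧ u' < gscale μ t' := hu'
    have hxu' : s' - u' = s - u := hxu
    clear hu hu' hxu
    have hss : s = s' := by omega
    subst hss
    have huu : u = u' := by omega
    subst huu
    have hlt : ∀ {a b : ℕ}, a < b → gscale μ a < dscale μ b := by
      intro a b hab
      refine lt_of_lt_of_le ?_ (dscale_mono μ (Nat.succ_le_of_lt hab))
      rw [dscale_succ]
      have := gscale_pos μ a
      omega
    rcases lt_trichotomy t t' with h | h | h
    · have := hlt h; omega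
    · exact hne (by rw [h])
    · have := hlt h; omega
  calc ((∑ t ∈ Finset.range n, (t + μ) * (lonely μ γ t).card : ℕ) : ℝ≥0∞)
      = ∑ i ∈ J, ((i.1 + μ : ℕ) : ℝ≥0∞) := by
        rw [hJ, Finset.sum_sigma]
        push_cast
        refine Finset.sum_congr rfl fun t _ => ?_
        rw [Finset.sum_const, nsmul_eq_mul, mul_comm]
    _ ≤ ∑ i ∈ J, 18 * ∑ x ∈ W i, rightCut α (interior γ) x := by
        refine Finset.sum_le_sum fun i hi => ?_
        exact le_sum_rightCut_of_lonely hα0 hα2 hγ hirr (Finset.mem_sigma.mp hi).2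
    _ = 18 * ∑ x ∈ J.biUnion W, rightCut α (interior γ) x := by
        rw [Finset.sum_biUnion hdisj, Finset.mul_sum]
    _ ≤ _ := by
        gcongr
        exact ENNReal.sum_le_tsum _

/-- The distance from `p` to the preceding point of `γ`, and `0` if there is none. -/
def pgap (γ : Finset ℤ) (p : ℤ) : ℕ := sInf {n : ℕ | 0 < n ∧ p - n ∈ γ}

lemma pgap_le {γ : Finset ℤ} {p q : ℤ} (hq : q ∈ γ) (hqp : q < p) : (pgap γ p : ℤ) ≤ p - q := by
  have h : (p - q).toNat ∈ {n : ℕ | 0 < n ∧ p - n ∈ γ} := by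
    refine ⟨by omega, ?_⟩
    rw [Int.toNat_of_nonneg (by omega), sub_sub_cancel]
    exact hq
  have := Nat.sInf_le h
  unfold pgap
  omega

lemma sub_pgap_mem {γ : Finset ℤ} {p : ℤ} (h : 0 < pgap γ p) : p - pgap γ p ∈ γ :=
  (Nat.sInf_mem (Nat.nonempty_of_pos_sInf h)).2

lemma card_filter_pgap_le (μ : ℕ) (γ : Finset ℤ) (t : ℕ) :
    (γ.filter fun p => dscale μ t < pgap γ p).card ≤ thinCard μ γ t := by
  rcases (γ.filter fun p => dscale μ t < pgap γ p).eq_empty_or_nonempty with h | ⟨p, hp⟩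
  · rw [h]; simp
  have hsub : (γ.filter fun p => dscale μ t < pgap γ p) ⊆ thinSeq μ γ t := by
    intro p hp
    obtain ⟨hp, hgap⟩ := Finset.mem_filter.mp hp
    obtain ⟨s, hs, h1, h2⟩ := exists_mem_thinSeq μ γ t hp
    rcases h1.lt_or_eq with h | rfl
    · have := pgap_le (thinSeq_subset μ γ t hs) h
      omega
    · exact hs
  have hp' := Finset.mem_filter.mp hp
  have hd := dscale_pos μ t
  obtain ⟨s, hs, h1, h2⟩ := exists_mem_thinSeq μ γ t (sub_pgap_mem (γ := γ) (p := p) (by omega))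
  have htwo : 2 ≤ (thinSeq μ γ t).card :=
    Finset.one_lt_card.mpr ⟨p, hsub hp, s, hs, by omega⟩
  rw [thinCard, if_pos htwo]
  exact Finset.card_le_card hsub

lemma min_dscale_le (μ : ℕ) (m : ℤ) (n : ℕ) :
    min m (dscale μ n) ≤ 2 ^ ∑ t ∈ Finset.range n, if dscale μ t < m then t + μ + 2 else 0 := by
  induction n with
  | zero => simp [dscale]
  | succ n ih =>
    rw [Finset.sum_range_succ]
    split_ifs with h
    · rw [min_eq_right h.le] at ih
      refine (min_le_right _ _).trans ?_
      rw [pow_add]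
      calc dscale μ (n + 1) = dscale μ n * 2 ^ (n + μ + 2) := by rw [dscale, mul_comm]
        _ ≤ _ := mul_le_mul_of_nonneg_right ih (by positivity)
    · rw [min_eq_left (not_lt.mp h)] at ih
      exact (min_le_left _ _).trans ih

/-- The logarithmic length of a contour. -/
def logLength (γ : Finset ℤ) : ℝ := ∑ p ∈ γ, Real.log (1 + pgap γ p)

lemma logLength_le {μ : ℕ} (hμ : 2 ≤ μ) (γ : Finset ℤ) :
    ∃ n : ℕ, logLength γ ≤ ((γ.card + (6 * (μ + 2) * γ.card +
      5 * ∑ t ∈ Finset.range n, (t + μ) * (lonely μ γ t).card) : ℕ) : ℝ) := by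
  set n := γ.sup (pgap γ) with hn
  refine ⟨n, ?_⟩
  have hlog : ∀ p ∈ γ, Real.log (1 + pgap γ p) ≤
      ((1 + ∑ t ∈ Finset.range n, if dscale μ t < pgap γ p then t + μ + 2 else 0 : ℕ) : ℝ) := by
    intro p hp
    set E := ∑ t ∈ Finset.range n, if dscale μ t < pgap γ p then t + μ + 2 else 0 with hE
    have h1 : pgap γ p ≤ n := Finset.le_sup hp
    have h2 := min_dscale_le μ (pgap γ p) n
    have h3 := lt_dscale μ n
    rw [min_eq_left (by omega)] at h2
    have h4 : 1 + pgap γ p ≤ 2 ^ (1 + E) := by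
      have h5 : pgap γ p ≤ 2 ^ E := by exact_mod_cast h2
      have h6 : 1 ≤ 2 ^ E := Nat.one_le_two_pow
      rw [pow_add]; omega
    calc Real.log (1 + pgap γ p) ≤ Real.log (2 ^ (1 + E)) := by
          apply Real.log_le_log (by positivity)
          exact_mod_cast h4
      _ = ((1 + E : ℕ) : ℝ) * Real.log 2 := by rw [Real.log_pow]
      _ ≤ ((1 + E : ℕ) : ℝ) * 1 := by
          gcongr
          linarith [Real.log_two_lt_d9]
      _ = _ := mul_one _
  refine (Finset.sum_le_sum hlog).trans ?_
  rw [← Nat.cast_sum, Nat.cast_le, Finset.sum_add_distrib, Finset.sum_const, smul_eq_mul, mul_one]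
  gcongr
  refine le_trans ?_ (sum_thinCard_le hμ γ n)
  rw [Finset.sum_comm]
  refine Finset.sum_le_sum fun t _ => ?_
  rw [← Finset.sum_filter, Finset.sum_const, smul_eq_mul, mul_comm]
  exact Nat.mul_le_mul_left _ (card_filter_pgap_le μ γ t)

lemma logLength_le_cut {α : ℝ} (hα1 : 1 < α) (hα2 : α ≤ 2) {μ : ℕ} (hμ : 2 ≤ μ) {γ : Finset ℤ}
    (hγ : Even γ.card) (hirr : Irreducible μ γ) :
    logLength γ ≤ (6 * μ + 103) * (cut α (interior γ)).toReal := by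
  obtain ⟨n, hn⟩ := logLength_le hμ γ
  refine hn.trans ?_
  have hfin := cut_ne_top hα1 (interior γ)
  have h1 : (γ.card : ℝ) ≤ (cut α (interior γ)).toReal := by
    rw [← ENNReal.toReal_natCast]
    exact ENNReal.toReal_mono hfin (card_le_cut α hγ)
  have h2 : ((∑ t ∈ Finset.range n, (t + μ) * (lonely μ γ t).card : ℕ) : ℝ) ≤
      18 * (cut α (interior γ)).toReal := by
    have := ENNReal.toReal_mono (ENNReal.mul_ne_top (by norm_num) hfin)
      (sum_lonely_le (by linarith) hα2 hγ hirr n)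
    rw [ENNReal.toReal_natCast, ENNReal.toReal_mul] at this
    simpa using this
  set c := (cut α (interior γ)).toReal
  set T := ∑ t ∈ Finset.range n, (t + μ) * (lonely μ γ t).card
  push_cast
  have h3 : (μ : ℝ) * γ.card ≤ μ * c := by gcongr
  linarith

lemma pgap_insert_of_le {γ : Finset ℤ} {m p : ℤ} (h : p ≤ m) :
    pgap (insert m γ) p = pgap γ p := by
  unfold pgap
  congr 1
  ext n
  simp only [Set.mem_ofPred_eq, Finset.mem_insert]
  constructor
  · rintro ⟨hn, h' | h'⟩
    · omega
    · exact ⟨hn, h'⟩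
  · exact fun h' => ⟨h'.1, Or.inr h'.2⟩

lemma pgap_pos {γ : Finset ℤ} {p q : ℤ} (hq : q ∈ γ) (hqp : q < p) : 0 < pgap γ p := by
  have h : (p - q).toNat ∈ {n : ℕ | 0 < n ∧ p - n ∈ γ} := by
    refine ⟨by omega, ?_⟩
    rw [Int.toNat_of_nonneg (by omega), sub_sub_cancel]
    exact hq
  exact (Nat.sInf_mem ⟨_, h⟩).1

lemma pgap_add_one_of_mem {γ : Finset ℤ} {m : ℤ} (h : m ∈ γ) : pgap γ (m + 1) = 1 := by
  have h1 := pgap_pos h (by omega : m < m + 1)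
  have h2 := pgap_le h (by omega : m < m + 1)
  omega

lemma pgap_add_one {γ : Finset ℤ} {m q : ℤ} (h : m ∉ γ) (hq : q ∈ γ) (hqm : q < m) :
    pgap γ (m + 1) = pgap γ m + 1 := by
  have h1 := pgap_pos hq hqm
  have h2 := pgap_pos hq (by omega : q < m + 1)
  have h3 := sub_pgap_mem h1
  have h4 := sub_pgap_mem h2
  have h5 := pgap_le h3 (by omega : _ < m + 1)
  have h6 : m + 1 - (pgap γ (m + 1) : ℤ) ≠ m := fun h' => h (h' ▸ h4)
  have h7 := pgap_le h4 (by omega : _ < m)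
  omega

lemma pgap_of_forall_le {γ : Finset ℤ} {p : ℤ} (h : ∀ q ∈ γ, p ≤ q) : pgap γ p = 0 := by
  by_contra hne
  have h1 : 0 < pgap γ p := Nat.pos_of_ne_zero hne
  have := h _ (sub_pgap_mem h1)
  omega

/-- The product of the gaps of a contour, each increased by one; its logarithm is the
logarithmic length. -/
def gapProd (γ : Finset ℤ) : ℕ := ∏ p ∈ γ, (1 + pgap γ p)

lemma gapProd_pos (γ : Finset ℤ) : 0 < gapProd γ := Finset.prod_pos fun _ _ => by omega

lemma log_gapProd (γ : Finset ℤ) : Real.log (gapProd γ) = logLength γ := by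
  rw [gapProd, logLength]
  push_cast
  exact Real.log_prod fun p _ => by positivity

lemma gapProd_insert {γ : Finset ℤ} {m : ℤ} (h : ∀ x ∈ γ, x < m) :
    gapProd (insert m γ) = (1 + pgap γ m) * gapProd γ := by
  have hm : m ∉ γ := fun h' => lt_irrefl _ (h m h')
  rw [gapProd, Finset.prod_insert hm, pgap_insert_of_le le_rfl, gapProd]
  congr 1
  exact Finset.prod_congr rfl fun p hp => by rw [pgap_insert_of_le (h p hp).le]

lemma gapProd_singleton (a : ℤ) : gapProd {a} = 1 := by
  rw [gapProd, Finset.prod_singleton, pgap_of_forall_le]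
  simp

lemma one_add_sub_le_gapProd (γ : Finset ℤ) :
    ∀ a ∈ γ, ∀ c ∈ γ, 1 + c - a ≤ (gapProd γ : ℤ) := by
  induction γ using Finset.induction_on_max with
  | empty => simp
  | insert m γ hm ih =>
    intro a ha c hc
    rw [gapProd_insert hm]
    have hpos : (1 : ℤ) ≤ gapProd γ := by exact_mod_cast gapProd_pos γ
    push_cast
    rcases Finset.mem_insert.mp ha with rfl | ha'
    · have : c ≤ a := by
        rcases Finset.mem_insert.mp hc with rfl | hc
        · exact le_rfl
        · exact (hm c hc).le
      nlinarith [Int.natCast_nonneg (pgap γ a)]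
    rcases Finset.mem_insert.mp hc with rfl | hc
    · have h1 := pgap_pos ha' (hm a ha')
      have h2 := pgap_le ha' (hm a ha')
      have h3 := ih a ha' _ (sub_pgap_mem h1)
      nlinarith
    · have := ih a ha' c hc
      nlinarith [Int.natCast_nonneg (pgap γ m)]

lemma sum_gapProd_cube_aux (a : ℤ) (n : ℕ) :
    ∑ γ ∈ (Finset.Ioc a (a + n)).powerset, ((gapProd (insert a γ) : ℝ)⁻¹) ^ 3 *
      (1 + ((pgap (insert a γ) (a + n + 1) : ℝ))⁻¹) ≤ 2 := by
  induction n with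
  | zero =>
    simp [gapProd_singleton, pgap_add_one_of_mem]
    norm_num
  | succ n ih =>
    have hI : Finset.Ioc a (a + (n + 1 : ℕ)) = insert (a + n + 1) (Finset.Ioc a (a + n)) := by
      ext x; simp only [Finset.mem_Ioc, Finset.mem_insert]; push_cast; omega
    have hnot : a + n + 1 ∉ Finset.Ioc a (a + n) := by simp
    rw [hI, Finset.sum_powerset_insert hnot, ← Finset.sum_add_distrib]
    refine le_trans (Finset.sum_le_sum fun γ hγ => ?_) ih
    have hγ' : ∀ x ∈ insert a γ, x < a + n + 1 := by
      intro x hx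
      rcases Finset.mem_insert.mp hx with rfl | hx
      · omega
      · have := Finset.mem_Ioc.mp (Finset.mem_powerset.mp hγ hx); omega
    have ha : a ∈ insert a γ := Finset.mem_insert_self _ _
    have hm : a + n + 1 ∉ insert a γ := fun h => lt_irrefl _ (hγ' _ h)
    have e1 : (a + (n + 1 : ℕ) + 1 : ℤ) = (a + n + 1) + 1 := by push_cast; ring
    rw [e1, Finset.insert_comm, gapProd_insert hγ',
      pgap_add_one_of_mem (Finset.mem_insert_self _ _), pgap_add_one hm ha (hγ' a ha)]
    have hj : (1 : ℝ) ≤ pgap (insert a γ) (a + n + 1) := by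
      exact_mod_cast pgap_pos ha (hγ' a ha)
    push_cast
    generalize (pgap (insert a γ) (a + n + 1) : ℝ) = j at *
    have hG : 0 ≤ ((gapProd (insert a γ) : ℝ)⁻¹) ^ 3 := by positivity
    rw [mul_inv, mul_pow]
    have key : (j + 1)⁻¹ + ((1 + j)⁻¹) ^ 3 * 2 ≤ j⁻¹ := by
      rw [inv_eq_one_div, inv_eq_one_div, inv_eq_one_div, div_pow, ← sub_nonneg]
      have : 1 / j - (1 / (j + 1) + 1 ^ 3 / (1 + j) ^ 3 * 2) =
          ((1 + j) ^ 2 - 2 * j) / (j * (1 + j) ^ 3) := by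
        field_simp
        ring
      rw [this]
      apply div_nonneg <;> [nlinarith; positivity]
    have := mul_le_mul_of_nonneg_left key hG
    norm_num at this ⊢
    linarith

lemma sum_gapProd_cube_le (a c : ℤ) :
    ∑ γ ∈ (Finset.Ioc a c).powerset, ((gapProd (insert a γ) : ℝ)⁻¹) ^ 3 ≤ 2 := by
  obtain ⟨n, hn⟩ : ∃ n : ℕ, Finset.Ioc a c = Finset.Ioc a (a + n) := by
    refine ⟨(c - a).toNat, ?_⟩
    ext x; simp only [Finset.mem_Ioc]; omega
  rw [hn]
  refine le_trans (Finset.sum_le_sum fun γ _ => ?_) (sum_gapProd_cube_aux a n)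
  exact le_mul_of_one_le_right (by positivity) (by simp)

lemma sum_inv_pow_le (k L : ℕ) :
    ∑ a ∈ Finset.Icc (-(L : ℤ)) 0, ((2 - a : ℝ)⁻¹) ^ (k + 2) ≤
      (1 / 2) ^ k * (1 - ((L : ℝ) + 2)⁻¹) := by
  induction L with
  | zero =>
    simp [pow_add]
    norm_num
  | succ L ih =>
    have hI : Finset.Icc (-((L + 1 : ℕ) : ℤ)) 0 =
        insert (-(L + 1 : ℤ)) (Finset.Icc (-(L : ℤ)) 0) := by
      ext x; simp only [Finset.mem_Icc, Finset.mem_insert]; push_cast; omega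
    rw [hI, Finset.sum_insert (by simp)]
    push_cast
    have h0 : (2 - (-((L : ℝ) + 1))) = L + 3 := by ring
    have h1 : (L : ℝ) + 1 + 2 = L + 3 := by ring
    rw [h0, h1]
    have hL : (0 : ℝ) ≤ L := by positivity
    have h2 : (((L : ℝ) + 3)⁻¹) ^ k ≤ (1 / 2) ^ k := by
      apply pow_le_pow_left₀ (by positivity)
      rw [one_div]
      exact inv_anti₀ (by norm_num) (by linarith)
    have h3 : (((L : ℝ) + 3)⁻¹) ^ 2 ≤ ((L : ℝ) + 2)⁻¹ - ((L : ℝ) + 3)⁻¹ := by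
      rw [← sub_nonneg]
      have : ((L : ℝ) + 2)⁻¹ - ((L : ℝ) + 3)⁻¹ - (((L : ℝ) + 3)⁻¹) ^ 2 =
          1 / ((L + 2) * (L + 3) ^ 2) := by
        field_simp
        ring
      rw [this]
      positivity
    have h4 := mul_le_mul h2 h3 (by positivity) (by positivity)
    rw [pow_add]
    linarith

/-- The total weight of the contours in a box that surround the origin. -/
lemma sum_gapProd_le (k L : ℕ) (Γ : Finset (Finset ℤ))
    (hΓ : ∀ γ ∈ Γ, γ ⊆ Finset.Icc (-(L : ℤ)) (L + 1) ∧ (∃ p ∈ γ, p ≤ 0) ∧ ∃ p ∈ γ, 0 < p) :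
    ∑ γ ∈ Γ, ((gapProd γ : ℝ)⁻¹) ^ (k + 5) ≤ 2 * (1 / 2) ^ k := by
  set T := (Finset.Icc (-(L : ℤ)) 0).sigma fun a => (Finset.Ioc a (L + 1 : ℤ)).powerset with hT
  have hmin : ∀ γ ∈ Γ, ∃ a ∈ γ, a ∈ Finset.Icc (-(L : ℤ)) 0 ∧
      γ.erase a ∈ (Finset.Ioc a (L + 1 : ℤ)).powerset := by
    intro γ hγ
    obtain ⟨hsub, ⟨p, hp, hp0⟩, -⟩ := hΓ γ hγ
    have hne : γ.Nonempty := ⟨p, hp⟩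
    have hle := γ.min'_le p hp
    have hm := γ.min'_mem hne
    refine ⟨γ.min' hne, hm, ?_, ?_⟩
    · have := Finset.mem_Icc.mp (hsub hm)
      rw [Finset.mem_Icc]; omega
    · rw [Finset.mem_powerset]
      intro x hx
      obtain ⟨hx1, hx2⟩ := Finset.mem_erase.mp hx
      have := Finset.mem_Icc.mp (hsub hx2)
      have := γ.min'_le x hx2
      rw [Finset.mem_Ioc]; omega
  choose! m hmγ hmI hmP using hmin
  set f : Finset ℤ → (_ : ℤ) × Finset ℤ := fun γ => ⟨m γ, γ.erase (m γ)⟩ with hf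
  have hinj : Set.InjOn f Γ := by
    intro γ hγ γ' hγ' h
    have h1 : m γ = m γ' := congrArg Sigma.fst h
    have h2 : γ.erase (m γ) = γ'.erase (m γ') := congrArg (fun i => i.2) h
    rw [← Finset.insert_erase (hmγ γ hγ), h2, h1, Finset.insert_erase (hmγ γ' hγ')]
  set F : (_ : ℤ) × Finset ℤ → ℝ := fun i =>
    ((2 - i.1 : ℝ)⁻¹) ^ (k + 2) * ((gapProd (insert i.1 i.2) : ℝ)⁻¹) ^ 3 with hF
  calc ∑ γ ∈ Γ, ((gapProd γ : ℝ)⁻¹) ^ (k + 5)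
      ≤ ∑ γ ∈ Γ, F (f γ) := by
        refine Finset.sum_le_sum fun γ hγ => ?_
        obtain ⟨-, -, c, hc, hc0⟩ := hΓ γ hγ
        have h1 := one_add_sub_le_gapProd γ _ (hmγ γ hγ) c hc
        have h2 := Finset.mem_Icc.mp (hmI γ hγ)
        have h3 : (2 - m γ : ℤ) ≤ gapProd γ := by omega
        have h3' : (2 - m γ : ℝ) ≤ gapProd γ := by exact_mod_cast h3
        have h4 : (m γ : ℝ) ≤ 0 := by exact_mod_cast h2.2
        simp only [hF, hf, Finset.insert_erase (hmγ γ hγ)]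
        rw [show k + 5 = (k + 2) + 3 from rfl, pow_add]
        gcongr
        linarith
    _ = ∑ i ∈ Γ.image f, F i := (Finset.sum_image hinj).symm
    _ ≤ ∑ i ∈ T, F i := by
        apply Finset.sum_le_sum_of_subset_of_nonneg
        · intro i hi
          obtain ⟨γ, hγ, rfl⟩ := Finset.mem_image.mp hi
          exact Finset.mem_sigma.mpr ⟨hmI γ hγ, hmP γ hγ⟩
        · intro i hi _
          have h2 := (Finset.mem_Icc.mp (Finset.mem_sigma.mp hi).1).2
          have h4 : (i.1 : ℝ) ≤ 0 := by exact_mod_cast h2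
          have : (0 : ℝ) ≤ 2 - i.1 := by linarith
          simp only [hF]
          positivity
    _ ≤ ∑ a ∈ Finset.Icc (-(L : ℤ)) 0, ((2 - a : ℝ)⁻¹) ^ (k + 2) * 2 := by
        rw [hT, Finset.sum_sigma]
        refine Finset.sum_le_sum fun a ha => ?_
        have h4 : (a : ℝ) ≤ 0 := by exact_mod_cast (Finset.mem_Icc.mp ha).2
        have : (0 : ℝ) ≤ 2 - a := by linarith
        simp only [hF]
        rw [← Finset.mul_sum]
        exact mul_le_mul_of_nonneg_left (sum_gapProd_cube_le a _) (by positivity)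
    _ ≤ _ := by
        rw [← Finset.sum_mul, mul_comm]
        refine mul_le_mul_of_nonneg_left ((sum_inv_pow_le k L).trans ?_) (by norm_num)
        refine mul_le_of_le_one_right (by positivity) ?_
        have : (0 : ℝ) ≤ ((L : ℝ) + 2)⁻¹ := by positivity
        linarith

variable {α : ℝ}

lemma hamJ_eq (σ : ℤ → ℝ) (A : Finset ℤ)
    (hσ : ∀ x y, 1 - σ x * σ y = if x ∈ A ↔ y ∈ A then 0 else 2) :
    hamJ α σ = 2 * (cut α A).toReal := by
  set g : ℤ × ℤ → ℝ≥0∞ := fun p =>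
    if ¬ (p.1 ∈ A ↔ p.2 ∈ A) then kern α (p.2 - p.1) else 0 with hg
  have hgne : ∀ p, g p ≠ ⊤ := by
    intro p
    simp only [hg]
    split_ifs
    · exact ENNReal.zero_ne_top
    · exact kern_ne_top _ _
  have hcut : cut α A = ∑' p, g p := by
    rw [ENNReal.tsum_prod']
    rfl
  rw [hcut, ENNReal.tsum_toReal_eq hgne, ← tsum_mul_left, hamJ]
  refine tsum_congr fun p => ?_
  rw [hσ]
  simp only [hg, kern]
  by_cases h : p.1 < p.2
  · have h1 : (0 : ℝ) < (p.2 : ℝ) - p.1 := by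
      have : (p.1 : ℝ) < p.2 := by exact_mod_cast h
      linarith
    have h2 : |(p.1 : ℝ) - p.2| = ((p.2 - p.1 : ℤ) : ℝ) := by
      rw [abs_sub_comm, abs_of_pos h1]; push_cast; ring
    rw [if_pos h, if_pos (by omega : 0 < p.2 - p.1), h2]
    split_ifs
    · simp
    · rw [ENNReal.toReal_ofReal (by rw [← h2]; positivity), mul_comm]
  · rw [if_neg h, if_neg (by omega : ¬ 0 < p.2 - p.1)]
    simp

/-- The energy of a configuration in terms of its set of overturned spins. -/
def energy (α : ℝ) (k : ℤ → ℝ) (A : Finset ℤ) : ℝ := 2 * (cut α A).toReal - 2 * ∑ x ∈ A, k x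

lemma hamP_spinP (h : ℤ → ℝ) (A : Finset ℤ) :
    hamP α h (spinP A) = energy α (fun x => -h x) A := by
  have h1 : ∀ x y, 1 - spinP A x * spinP A y = if x ∈ A ↔ y ∈ A then 0 else 2 := by
    intro x y
    by_cases hx : x ∈ A <;> by_cases hy : y ∈ A <;> simp [spinP, hx, hy] <;> norm_num
  rw [hamP, hamJ_eq _ A h1, tsum_eq_sum (s := A), energy, Finset.sum_neg_distrib,
    mul_neg, sub_neg_eq_add, Finset.mul_sum]
  · congr 1
    refine Finset.sum_congr rfl fun x hx => ?_
    rw [spinP, if_pos hx]; ring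
  · intro x hx
    rw [spinP, if_neg hx]; ring

lemma hamM_spinM (h : ℤ → ℝ) (A : Finset ℤ) :
    hamM α h (spinM A) = energy α h A := by
  have h1 : ∀ x y, 1 - spinM A x * spinM A y = if x ∈ A ↔ y ∈ A then 0 else 2 := by
    intro x y
    by_cases hx : x ∈ A <;> by_cases hy : y ∈ A <;> simp [spinM, hx, hy] <;> norm_num
  rw [hamM, hamJ_eq _ A h1, tsum_eq_sum (s := A), energy, Finset.mul_sum]
  · congr 1
    refine Finset.sum_congr rfl fun x hx => ?_
    rw [spinM, if_pos hx]; ring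
  · intro x hx
    rw [spinM, if_neg hx]; ring

lemma sum_abs_le_cut (hα : 1 < α) {κ : ℝ} (hκ : 0 ≤ κ) {k : ℤ → ℝ} (hk0 : k 0 = 0)
    (hk : ∀ x ≠ 0, |k x| ≤ κ * |(x : ℝ)| ^ (1 - α)) (A : Finset ℤ) :
    ∑ x ∈ A, |k x| ≤ κ * (cut α A).toReal := by
  have h1 : ∑ x ∈ A, |k x| = ∑ x ∈ A.erase 0, |k x| :=
    (Finset.sum_erase A (by rw [hk0, abs_zero])).symm
  have h2 : ∑ x ∈ A.erase 0, |(x : ℝ)| ^ (1 - α) ≤ (cut α A).toReal := by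
    rw [← ENNReal.ofReal_le_iff_le_toReal (cut_ne_top hα A),
      ENNReal.ofReal_sum_of_nonneg fun x _ => by positivity]
    exact sum_rpow_le_cut hα A
  calc ∑ x ∈ A, |k x| ≤ ∑ x ∈ A.erase 0, κ * |(x : ℝ)| ^ (1 - α) :=
        h1 ▸ Finset.sum_le_sum fun x hx => hk x (Finset.ne_of_mem_erase hx)
    _ ≤ _ := by
        rw [← Finset.mul_sum]
        exact mul_le_mul_of_nonneg_left h2 hκ

lemma sum_sub_sum_symmDiff_le (k : ℤ → ℝ) (A I : Finset ℤ) :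
    ∑ x ∈ A, k x - ∑ x ∈ symmDiff A I, k x ≤ ∑ x ∈ I, |k x| := by
  have h1 : ∑ x ∈ A, k x = ∑ x ∈ A \ I, k x + ∑ x ∈ A ∩ I, k x := by
    rw [add_comm, Finset.sum_inter_add_sum_sdiff]
  have h2 : ∑ x ∈ symmDiff A I, k x = ∑ x ∈ A \ I, k x + ∑ x ∈ I \ A, k x := by
    rw [symmDiff_def, Finset.sup_eq_union, Finset.sum_union disjoint_sdiff_sdiff]
  have h3 : ∑ x ∈ I, |k x| = ∑ x ∈ I ∩ A, |k x| + ∑ x ∈ I \ A, |k x| := by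
    rw [Finset.sum_inter_add_sum_sdiff]
  have h4 : ∑ x ∈ A ∩ I, k x ≤ ∑ x ∈ I ∩ A, |k x| := by
    rw [Finset.inter_comm]
    exact Finset.sum_le_sum fun x _ => le_abs_self _
  have h5 : -∑ x ∈ I \ A, k x ≤ ∑ x ∈ I \ A, |k x| := by
    rw [← Finset.sum_neg_distrib]
    exact Finset.sum_le_sum fun x _ => neg_le_abs _
  linarith

lemma exists_scale (hα : 1 < α) {η : ℝ} (hη : 0 < η) :
    ∃ μ : ℕ, 2 ≤ μ ∧ ((2 ^ μ : ℕ) : ℝ) ^ (1 - α) + 4 * ((2 : ℝ) ^ μ)⁻¹ ≤ η := by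
  have h1 : Filter.Tendsto (fun μ : ℕ => ((2 ^ μ : ℕ) : ℝ)) Filter.atTop Filter.atTop :=
    tendsto_natCast_atTop_atTop.comp (tendsto_pow_atTop_atTop_of_one_lt (by norm_num))
  have h2 := (tendsto_rpow_neg_atTop (by linarith : 0 < α - 1)).comp h1
  have h3 := (tendsto_inv_atTop_zero.comp h1).const_mul 4
  have h4 := h2.add h3
  rw [mul_zero, add_zero] at h4
  obtain ⟨μ, hμ, hμ2⟩ := ((h4.eventually_lt_const hη).and (Filter.eventually_ge_atTop 2)).exists
  refine ⟨μ, hμ2, ?_⟩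
  have h5 := hμ.le
  simpa using h5

/-- Erasing a contour lowers the energy by at least a multiple of the cut of its interior. -/
lemma energy_symmDiff_le (hα : 1 < α) {κ : ℝ} (hκ : 0 ≤ κ) {k : ℤ → ℝ} (hk0 : k 0 = 0)
    (hk : ∀ x ≠ 0, |k x| ≤ κ * |(x : ℝ)| ^ (1 - α)) {μ : ℕ}
    (hμ : ((2 ^ μ : ℕ) : ℝ) ^ (1 - α) + 4 * ((2 : ℝ) ^ μ)⁻¹ ≤ (1 - κ) / 4)
    {A : Finset ℤ} {P : Finset (Finset ℤ)} (hP : IsContourPartition μ (flips A) P)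
    {γ : Finset ℤ} (hγ : γ ∈ P) :
    energy α k (symmDiff A (interior γ)) + (1 - κ) * (cut α (interior γ)).toReal ≤
      energy α k A := by
  set I := interior γ
  have h1 := cut_symmDiff_add α (symmDiff A I) I
  rw [symmDiff_symmDiff_cancel_right] at h1
  have hI := cut_ne_top hα I
  have hA := cut_ne_top hα A
  have hA' := cut_ne_top hα (symmDiff A I)
  have h2 : crossCut α (symmDiff A I) I ≤ ENNReal.ofReal ((1 - κ) / 4) * cut α I := by
    refine (hP.crossCut_le hα hγ).trans ?_
    gcongr
    have : (4 * (2 ^ μ)⁻¹ : ℝ≥0∞) = ENNReal.ofReal (4 * ((2 : ℝ) ^ μ)⁻¹) := by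
      rw [ENNReal.ofReal_mul (by norm_num), ENNReal.ofReal_inv_of_pos (by positivity),
        ENNReal.ofReal_pow (by norm_num)]
      simp
    rw [this, ← ENNReal.ofReal_add (by positivity) (by positivity)]
    exact ENNReal.ofReal_le_ofReal hμ
  have hκ1 : 0 ≤ (1 - κ) / 4 := le_trans (by positivity) hμ
  have hcr : crossCut α (symmDiff A I) I ≠ ⊤ :=
    ne_top_of_le_ne_top (ENNReal.mul_ne_top ENNReal.ofReal_ne_top hI) h2
  have h3 := ENNReal.toReal_mono (ENNReal.mul_ne_top ENNReal.ofReal_ne_top hI) h2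
  rw [ENNReal.toReal_mul, ENNReal.toReal_ofReal hκ1] at h3
  have h4 := congrArg ENNReal.toReal h1
  rw [ENNReal.toReal_add hA (ENNReal.mul_ne_top (by norm_num) hcr), ENNReal.toReal_add hA' hI,
    ENNReal.toReal_mul] at h4
  have h5 := (sum_sub_sum_symmDiff_le k A I).trans (sum_abs_le_cut hα hκ hk0 hk I)
  norm_num at h4
  unfold energy
  linarith

lemma peierls (hα1 : 1 < α) (hα2 : α ≤ 2) {κ : ℝ} (hκ : 0 ≤ κ) (hκ1 : κ < 1) :
    ∃ c : ℝ, 0 < c ∧ ∀ k : ℤ → ℝ, k 0 = 0 → (∀ x ≠ 0, |k x| ≤ κ * |(x : ℝ)| ^ (1 - α)) →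
      ∀ (β : ℝ) (n L : ℕ), n + 5 ≤ β * c →
        ∑ A ∈ box L with 0 ∈ A, Real.exp (-β * energy α k A) ≤
          2 * (1 / 2) ^ n * ∑ A ∈ box L, Real.exp (-β * energy α k A) := by
  obtain ⟨μ, hμ2, hμ⟩ := exists_scale hα1 (by linarith : 0 < (1 - κ) / 4)
  have hd : (0 : ℝ) < 6 * μ + 103 := by positivity
  refine ⟨(1 - κ) / (6 * μ + 103), div_pos (by linarith) hd, fun k hk0 hk β n L hβ => ?_⟩
  set c := (1 - κ) / (6 * μ + 103) with hc
  have hc0 : 0 < c := div_pos (by linarith) hd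
  have hβ0 : 0 ≤ β := by
    by_contra h
    have : β * c ≤ 0 := mul_nonpos_of_nonpos_of_nonneg (by linarith) hc0.le
    have : (0 : ℝ) ≤ n := by positivity
    linarith
  set Γ := (Finset.Icc (-(L : ℤ)) (L + 1)).powerset.filter fun γ =>
    (∃ p ∈ γ, p ≤ 0) ∧ ∃ p ∈ γ, 0 < p with hΓ
  have hex : ∀ A ∈ (box L).filter (0 ∈ ·), ∃ γ ∈ Γ, symmDiff A (interior γ) ∈ box L ∧
      Real.exp (-β * energy α k A) ≤ ((gapProd γ : ℝ)⁻¹) ^ (n + 5) *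
        Real.exp (-β * energy α k (symmDiff A (interior γ))) := by
    intro A hA
    obtain ⟨hAL, h0⟩ := Finset.mem_filter.mp hA
    rw [box, Finset.mem_powerset] at hAL
    obtain ⟨P, hP, hirr⟩ := exists_contourPartition μ (even_card_flips A)
    obtain ⟨γ, hγ, hodd⟩ := hP.exists_odd_countLE ((mem_iff_odd_countLE_flips A 0).mp h0)
    have heven := hP.even γ hγ
    have hsub : γ ⊆ Finset.Icc (-(L : ℤ)) (L + 1) := by
      refine Finset.Subset.trans ?_ (flips_subset hAL)
      rw [← hP.biUnion_eq]
      exact Finset.subset_biUnion_of_mem id hγ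
    have hI : interior γ ⊆ Finset.Icc (-(L : ℤ)) L := by
      intro x hx
      have hx := (mem_interior heven).mp hx
      obtain ⟨p, hp, hpx⟩ := exists_le_of_odd_countLE hx
      obtain ⟨q, hq, hxq⟩ := exists_lt_of_odd_countLE heven hx
      have := Finset.mem_Icc.mp (hsub hp)
      have := Finset.mem_Icc.mp (hsub hq)
      rw [Finset.mem_Icc]; omega
    refine ⟨γ, Finset.mem_filter.mpr ⟨Finset.mem_powerset.mpr hsub,
      exists_le_of_odd_countLE hodd, exists_lt_of_odd_countLE heven hodd⟩, ?_, ?_⟩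
    · rw [box, Finset.mem_powerset]
      intro x hx
      rcases Finset.mem_symmDiff.mp hx with h | h
      · exact hAL h.1
      · exact hI h.1
    · have h1 := energy_symmDiff_le hα1 hκ hk0 hk hμ hP hγ
      have h2 := logLength_le_cut hα1 hα2 hμ2 heven (hirr γ hγ)
      have h3 : c * logLength γ ≤ (1 - κ) * (cut α (interior γ)).toReal := by
        calc c * logLength γ ≤ c * ((6 * μ + 103) * (cut α (interior γ)).toReal) :=
              mul_le_mul_of_nonneg_left h2 hc0.le
          _ = _ := by rw [hc, ← mul_assoc, div_mul_cancel₀ _ hd.ne']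
      have hG : (0 : ℝ) < gapProd γ := by exact_mod_cast gapProd_pos γ
      have h4 : 0 ≤ logLength γ := by
        rw [← log_gapProd]
        exact Real.log_natCast_nonneg _
      have h5 : ((gapProd γ : ℝ)⁻¹) ^ (n + 5) = Real.exp (-((n + 5 : ℕ) * logLength γ)) := by
        rw [← log_gapProd, Real.exp_neg, Real.exp_nat_mul, Real.exp_log hG, inv_pow]
      rw [h5, ← Real.exp_add]
      apply Real.exp_le_exp.mpr
      have h6 : (n + 5) * logLength γ ≤ β * c * logLength γ :=
        mul_le_mul_of_nonneg_right hβ h4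
      have h7 : β * (energy α k (symmDiff A (interior γ)) + c * logLength γ) ≤
          β * energy α k A := mul_le_mul_of_nonneg_left (by linarith) hβ0
      push_cast
      linarith
  choose! g hgΓ hgbox hgle using hex
  set f : Finset ℤ → Finset ℤ × Finset ℤ := fun A => (g A, symmDiff A (interior (g A))) with hf
  have hinj : Set.InjOn f ((box L).filter (0 ∈ ·)) := by
    intro A _ A' _ h
    have h1 : g A = g A' := congrArg Prod.fst h
    have h2 : symmDiff A (interior (g A)) = symmDiff A' (interior (g A')) := congrArg Prod.snd h
    rw [h1] at h2
    exact symmDiff_left_injective _ h2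
  set F : Finset ℤ × Finset ℤ → ℝ := fun i =>
    ((gapProd i.1 : ℝ)⁻¹) ^ (n + 5) * Real.exp (-β * energy α k i.2) with hF
  calc ∑ A ∈ box L with 0 ∈ A, Real.exp (-β * energy α k A)
      ≤ ∑ A ∈ box L with 0 ∈ A, F (f A) := Finset.sum_le_sum hgle
    _ = ∑ i ∈ ((box L).filter (0 ∈ ·)).image f, F i := (Finset.sum_image hinj).symm
    _ ≤ ∑ i ∈ Γ ×ˢ box L, F i := by
        apply Finset.sum_le_sum_of_subset_of_nonneg
        · intro i hi
          obtain ⟨A, hA, rfl⟩ := Finset.mem_image.mp hi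
          exact Finset.mem_product.mpr ⟨hgΓ A hA, hgbox A hA⟩
        · intro i _ _
          simp only [hF]
          positivity
    _ = (∑ γ ∈ Γ, ((gapProd γ : ℝ)⁻¹) ^ (n + 5)) *
          ∑ A ∈ box L, Real.exp (-β * energy α k A) := by
        rw [Finset.sum_product, Finset.sum_mul_sum]
    _ ≤ _ := by
        refine mul_le_mul_of_nonneg_right (sum_gapProd_le n L Γ fun γ hγ => ?_)
          (Finset.sum_nonneg fun _ _ => (Real.exp_pos _).le)
        obtain ⟨h1, h2⟩ := Finset.mem_filter.mp hγ
        exact ⟨Finset.mem_powerset.mp h1, h2⟩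

lemma sum_exp_pos (β : ℝ) (L : ℕ) (f : Finset ℤ → ℝ) :
    0 < ∑ A ∈ box L, Real.exp (-β * f A) :=
  Finset.sum_pos (fun _ _ => Real.exp_pos _) ⟨∅, by simp [box]⟩

lemma avgP_eq (α : ℝ) (h : ℤ → ℝ) (β : ℝ) (L : ℕ) :
    avgP α h β L = 1 - 2 * ((∑ A ∈ box L with 0 ∈ A,
      Real.exp (-β * energy α (fun x => -h x) A)) /
        ∑ A ∈ box L, Real.exp (-β * energy α (fun x => -h x) A)) := by
  have hZ := sum_exp_pos β L (energy α fun x => -h x)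
  rw [avgP]
  simp only [hamP_spinP]
  have hN : ∑ A ∈ box L, spinP A 0 * Real.exp (-β * energy α (fun x => -h x) A) =
      ∑ A ∈ box L, Real.exp (-β * energy α (fun x => -h x) A) -
        2 * ∑ A ∈ box L with 0 ∈ A, Real.exp (-β * energy α (fun x => -h x) A) := by
    rw [Finset.sum_filter, Finset.mul_sum, ← Finset.sum_sub_distrib]
    refine Finset.sum_congr rfl fun A _ => ?_
    rw [spinP]
    split_ifs <;> ring
  rw [hN, sub_div, div_self hZ.ne', mul_div_assoc]

lemma avgM_eq (α : ℝ) (h : ℤ → ℝ) (β : ℝ) (L : ℕ) :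
    avgM α h β L = -(1 - 2 * ((∑ A ∈ box L with 0 ∈ A, Real.exp (-β * energy α h A)) /
        ∑ A ∈ box L, Real.exp (-β * energy α h A))) := by
  have hZ := sum_exp_pos β L (energy α h)
  rw [avgM]
  simp only [hamM_spinM]
  have hN : ∑ A ∈ box L, spinM A 0 * Real.exp (-β * energy α h A) =
      2 * (∑ A ∈ box L with 0 ∈ A, Real.exp (-β * energy α h A)) -
        ∑ A ∈ box L, Real.exp (-β * energy α h A) := by
    rw [Finset.sum_filter, Finset.mul_sum, ← Finset.sum_sub_distrib]
    refine Finset.sum_congr rfl fun A _ => ?_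
    rw [spinM]
    split_ifs <;> ring
  rw [hN, sub_div, div_self hZ.ne', mul_div_assoc]
  ring

/-- After truncation the field is dominated by a small multiple of `|x|^{1-α}`. -/
lemma exists_hfTrunc_le {δ hs : ℝ} (hα1 : 1 < α) (hhs : 0 < hs)
    (hcase : (α - 1 < δ) ∨
      (α < 2 ∧ δ = α - 1 ∧ hs < (8 - 4 * α) / ((2 : ℝ) ^ (3 - α) + 6 - 3 * α)) ∨
      (α = 2 ∧ δ = 1 ∧ hs < 4 / (3 + 2 * Real.log 2))) :
    ∃ (R : ℕ) (κ : ℝ), 0 ≤ κ ∧ κ < 1 ∧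
      ∀ x : ℤ, x ≠ 0 → |hfTrunc hs δ R x| ≤ κ * |(x : ℝ)| ^ (1 - α) := by
  have hborder : δ = α - 1 → hs < 1 → ∃ (R : ℕ) (κ : ℝ), 0 ≤ κ ∧ κ < 1 ∧
      ∀ x : ℤ, x ≠ 0 → |hfTrunc hs δ R x| ≤ κ * |(x : ℝ)| ^ (1 - α) := by
    intro hδ h1
    refine ⟨0, hs, hhs.le, h1, fun x hx => ?_⟩
    have : ¬ |x| ≤ ((0 : ℕ) : ℤ) := by simpa using hx
    rw [hfTrunc, if_neg this, hf, if_neg hx, abs_of_nonneg (by positivity), hδ, neg_sub]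
  rcases hcase with h | ⟨h2, hδ, h⟩ | ⟨h2, hδ, h⟩
  · have h1 := ((tendsto_rpow_neg_atTop (by linarith : 0 < δ - (α - 1))).comp
      tendsto_natCast_atTop_atTop).const_mul hs
    rw [mul_zero] at h1
    obtain ⟨R, hR, hR1⟩ := ((h1.eventually_lt_const (by norm_num : (0 : ℝ) < 1 / 2)).and
      (Filter.eventually_ge_atTop 1)).exists
    refine ⟨R, 1 / 2, by norm_num, by norm_num, fun x hx => ?_⟩
    rw [hfTrunc]
    split_ifs with hxR
    · rw [abs_zero]; positivity
    · rw [hf, if_neg hx, abs_of_nonneg (by positivity)]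
      have hxR' : (R : ℝ) ≤ |(x : ℝ)| := by
        have : (R : ℤ) ≤ |x| := by omega
        exact_mod_cast this
      have hR0 : (0 : ℝ) < R := by exact_mod_cast hR1
      have hx0 : 0 < |(x : ℝ)| := hR0.trans_le hxR'
      have e : -δ = -(δ - (α - 1)) + (1 - α) := by ring
      rw [e, Real.rpow_add hx0, ← mul_assoc]
      refine mul_le_mul_of_nonneg_right ?_ (by positivity)
      refine le_trans (mul_le_mul_of_nonneg_left ?_ hhs.le) hR.le
      exact Real.rpow_le_rpow_of_nonpos hR0 hxR' (by linarith)
  · refine hborder hδ (h.trans_le ?_)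
    have h3 : (1 : ℝ) ≤ 2 ^ (3 - α) := Real.one_le_rpow (by norm_num) (by linarith)
    rw [div_le_one (by linarith)]
    linarith
  · refine hborder (by linarith) (h.trans_le ?_)
    have hl := Real.log_two_gt_d9
    rw [div_le_one (by positivity)]
    linarith

end LongRangeIsing

/-- phase transition in the presence of a polynomially decaying field
`h_x = h⋆|x|^{-δ}`, after truncation inside a sufficiently large box `[-R,R]`, in the
regions (i) `δ > α−1`, (ii) `δ = α−1`, `α < 2`, `h⋆` small, (iii) `α = 2`, `δ = 1`,
`h⋆` small. -/
theorem phase_transition_decaying_field (α δ hs : ℝ) (hα1 : 1 < α) (hα2 : α ≤ 2)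
    (hδ : 0 < δ) (hhs : 0 < hs)
    (hcase : (α - 1 < δ) ∨
      (α < 2 ∧ δ = α - 1 ∧ hs < (8 - 4 * α) / ((2 : ℝ) ^ (3 - α) + 6 - 3 * α)) ∨
      (α = 2 ∧ δ = 1 ∧ hs < 4 / (3 + 2 * Real.log 2))) :
    ∃ R : ℕ, ∀ ε : ℝ, 0 < ε → ε < 1 →
      ∃ β₀ : ℝ, 0 < β₀ ∧ ∀ β : ℝ, β₀ ≤ β → ∀ L : ℕ,
        1 - ε ≤ avgP α (hfTrunc hs δ R) β L ∧ avgM α (hfTrunc hs δ R) β L ≤ -(1 - ε) := by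
  obtain ⟨R, κ, hκ, hκ1, hR⟩ := LongRangeIsing.exists_hfTrunc_le hα1 hhs hcase
  obtain ⟨c, hc, hpeierls⟩ := LongRangeIsing.peierls hα1 hα2 hκ hκ1
  have hR0 : hfTrunc hs δ R 0 = 0 := by simp [hfTrunc]
  refine ⟨R, fun ε hε _ => ?_⟩
  obtain ⟨n, hn⟩ := exists_pow_lt_of_lt_one (by linarith : 0 < ε / 4)
    (by norm_num : (1 / 2 : ℝ) < 1)
  refine ⟨(n + 5) / c, by positivity, fun β hβ L => ?_⟩
  rw [div_le_iff₀ hc] at hβ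
  rw [LongRangeIsing.avgP_eq, LongRangeIsing.avgM_eq]
  have key : ∀ k : ℤ → ℝ, k 0 = 0 → (∀ x ≠ 0, |k x| ≤ κ * |(x : ℝ)| ^ (1 - α)) →
      (∑ A ∈ box L with 0 ∈ A, Real.exp (-β * LongRangeIsing.energy α k A)) /
        ∑ A ∈ box L, Real.exp (-β * LongRangeIsing.energy α k A) ≤ ε / 2 := by
    intro k hk0 hk
    rw [div_le_iff₀ (LongRangeIsing.sum_exp_pos β L _)]
    refine (hpeierls k hk0 hk β n L hβ).trans ?_
    refine mul_le_mul_of_nonneg_right ?_ (LongRangeIsing.sum_exp_pos β L _).le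
    linarith
  have h1 := key (fun x => -hfTrunc hs δ R x) (by rw [hR0, neg_zero])
    fun x hx => by rw [abs_neg]; exact hR x hx
  have h2 := key _ hR0 hR
  constructor <;> linarith
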